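/- arXiv:2603.17772 — 9 statements merged into one kernel-verified Lean document; each statement's English description precedes it below -/
import Mathlib

section
/- Let n ≥ 3. If a social choice function f : S₀ⁿ → A is onto and pairwise strategy-proof, then f is a target rule with a default; that is, there exist x, y ∈ A such that f(R^{0N}) = y and for every profile R ≠ R^{0N}: f(R) = x if τ̲(R) ≤ x ≤ τ̄(R), f(R) = τ̲(R) if x < τ̲(R), and f(R) = τ̄(R) if τ̄(R) < x. -/
/-- The set of alternatives: the closed interval [0,1]. -/
abbrev A : Type := Set.Icc (0:ℝ) 1

def zeroA : A := ⟨0, by constructor <;> norm_num⟩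
def oneA : A := ⟨1, by constructor <;> norm_num⟩

/-- A preference: a complete (total) and transitive binary relation on A. -/
structure Pref : Type where
  rel : A → A → Prop
  total : ∀ a b : A, rel a b ∨ rel b a
  trans : ∀ a b c : A, rel a b → rel b c → rel a c

/-- Strict part of a preference. -/
def Pref.P (R : Pref) (a b : A) : Prop := R.rel a b ∧ ¬ R.rel b a

/-- `p` is a peak of `R`: `R` is single-peaked with peak `p`. -/
def Pref.IsPeak (R : Pref) (p : A) : Prop :=
  ∀ a b : A, ((p ≤ a ∧ a < b) ∨ (b < a ∧ a ≤ p)) → R.P a b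

/-- Single-peaked preferences. -/
def SinglePeaked (R : Pref) : Prop := ∃ p : A, R.IsPeak p

/-- The completely indifferent preference R⁰. -/
def R0 : Pref :=
  ⟨fun _ _ => True, fun _ _ => Or.inl trivial, fun _ _ _ _ _ => trivial⟩

/-- The augmented domain S₀ = S ∪ {R⁰}. -/
def S0 : Type := {R : Pref // SinglePeaked R ∨ R = R0}

/-- The completely indifferent profile R^{0N}. -/
def indiffProfile (n : ℕ) : Fin n → S0 := fun _ => ⟨R0, Or.inr rfl⟩

open Classical in
/-- The peak of a single-peaked preference (junk value `zeroA` otherwise). -/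
noncomputable def peak (R : Pref) : A :=
  if h : SinglePeaked R then h.choose else zeroA

/-- τ̲(R): the smallest peak among non-indifferent agents (as a real number). -/
noncomputable def tmin {n : ℕ} (R : Fin n → S0) : ℝ :=
  sInf {x : ℝ | ∃ i : Fin n, (R i).1 ≠ R0 ∧ ((peak (R i).1 : ℝ) = x)}

/-- τ̄(R): the largest peak among non-indifferent agents (as a real number). -/
noncomputable def tmax {n : ℕ} (R : Fin n → S0) : ℝ :=
  sSup {x : ℝ | ∃ i : Fin n, (R i).1 ≠ R0 ∧ ((peak (R i).1 : ℝ) = x)}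

/-- Onto-ness. -/
def Onto {n : ℕ} (f : (Fin n → S0) → A) : Prop := ∀ a : A, ∃ R : Fin n → S0, f R = a

/-- (Individual) strategy-proofness. -/
def StrategyProof {n : ℕ} (f : (Fin n → S0) → A) : Prop :=
  ∀ (R : Fin n → S0) (i : Fin n) (Ri' : S0),
    (R i).1.rel (f R) (f (Function.update R i Ri'))

/-- No profitable deviation by the coalition `S`. -/
def CoalitionSP {n : ℕ} (f : (Fin n → S0) → A) (S : Finset (Fin n)) : Prop :=
  ¬ ∃ R R' : Fin n → S0,
      (∀ i ∉ S, R' i = R i) ∧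
      (∀ i ∈ S, (R i).1.rel (f R') (f R)) ∧
      (∃ j ∈ S, (R j).1.P (f R') (f R))

/-- Group strategy-proofness. -/
def GroupSP {n : ℕ} (f : (Fin n → S0) → A) : Prop :=
  ∀ S : Finset (Fin n), S.Nonempty → CoalitionSP f S

/-- Pairwise strategy-proofness. -/
def PairwiseSP {n : ℕ} (f : (Fin n → S0) → A) : Prop :=
  ∀ S : Finset (Fin n), S.Nonempty → S.card ≤ 2 → CoalitionSP f S

/-- No deviation making every member of `S` strictly better off. -/
def WeakCoalitionSP {n : ℕ} (f : (Fin n → S0) → A) (S : Finset (Fin n)) : Prop :=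
  ¬ ∃ R R' : Fin n → S0,
      (∀ i ∉ S, R' i = R i) ∧
      (∀ i ∈ S, (R i).1.P (f R') (f R))

/-- Weak group strategy-proofness. -/
def WeakGroupSP {n : ℕ} (f : (Fin n → S0) → A) : Prop :=
  ∀ S : Finset (Fin n), S.Nonempty → WeakCoalitionSP f S

/-- `a` is efficient at the profile `R`. -/
def EfficientAt {n : ℕ} (R : Fin n → S0) (a : A) : Prop :=
  ¬ ∃ b : A, b ≠ a ∧ (∀ i : Fin n, (R i).1.rel b a) ∧ (∃ j : Fin n, (R j).1.P b a)

/-- Efficiency of a social choice function. -/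
def Efficient {n : ℕ} (f : (Fin n → S0) → A) : Prop := ∀ R : Fin n → S0, EfficientAt R (f R)

/-- The tops-only property. -/
def TopsOnly {n : ℕ} (f : (Fin n → S0) → A) : Prop :=
  ∀ R R' : Fin n → S0,
    (∀ i : Fin n, (R i).1 = R0 ↔ (R' i).1 = R0) →
    (∀ i : Fin n, (R i).1 ≠ R0 → peak (R i).1 = peak (R' i).1) →
    f R = f R'

/-- Target rules with a default. -/
def IsTargetRule {n : ℕ} (f : (Fin n → S0) → A) : Prop :=
  ∃ x y : A, f (indiffProfile n) = y ∧
    ∀ R : Fin n → S0, R ≠ indiffProfile n →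
      ((tmin R ≤ (x : ℝ) ∧ (x : ℝ) ≤ tmax R) → f R = x) ∧
      ((x : ℝ) < tmin R → (f R : ℝ) = tmin R) ∧
      (tmax R < (x : ℝ) → (f R : ℝ) = tmax R)

namespace TR

theorem peak_rel {R : Pref} {a b : A} (h : R.IsPeak a) (hr : R.rel b a) : b = a := by
  by_contra hne
  rcases lt_or_gt_of_ne hne with h1 | h1
  · exact (h a b (Or.inr ⟨h1, le_rfl⟩)).2 hr
  · exact (h a b (Or.inl ⟨le_rfl, h1⟩)).2 hr

theorem le_of_rel_left {R : Pref} {a z w : A} (h : R.IsPeak a) (hw : a ≤ w) (hr : R.rel z w) :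
    z ≤ w := by
  by_contra hne
  exact (h w z (Or.inl ⟨hw, not_le.1 hne⟩)).2 hr

theorem le_of_rel_right {R : Pref} {a z w : A} (h : R.IsPeak a) (hw : w ≤ a) (hr : R.rel z w) :
    w ≤ z := by
  by_contra hne
  exact (h w z (Or.inr ⟨not_le.1 hne, hw⟩)).2 hr

theorem R0_not_peak (a : A) : ¬ R0.IsPeak a := by
  intro h
  have h1 : zeroA = a := peak_rel h trivial
  have h2 : oneA = a := peak_rel h trivial
  have h3 : zeroA = oneA := h1.trans h2.symm
  have h4 := congrArg Subtype.val h3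
  simp [zeroA, oneA] at h4

theorem peak_unique {R : Pref} {a b : A} (h : R.IsPeak a) (h' : R.IsPeak b) : a = b := by
  rcases R.total a b with h1 | h1
  · exact peak_rel h' h1
  · exact (peak_rel h h1).symm

theorem peak_spec {R : Pref} {a : A} (h : R.IsPeak a) : peak R = a := by
  have hs : SinglePeaked R := ⟨a, h⟩
  unfold peak
  rw [dif_pos hs]
  exact peak_unique hs.choose_spec h

/-- Tent utility preference. -/
def tent (p : A) (α β : ℝ) : Pref where
  rel a b := min (α * (b.1 - p.1)) (β * (p.1 - b.1)) ≤ min (α * (a.1 - p.1)) (β * (p.1 - a.1))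
  total _ _ := le_total _ _
  trans _ _ _ h1 h2 := le_trans h2 h1

theorem tent_left {p t : A} {α β : ℝ} (hα : 0 < α) (hβ : 0 < β) (h : t ≤ p) :
    min (α * (t.1 - p.1)) (β * (p.1 - t.1)) = α * (t.1 - p.1) := by
  have h' : t.1 ≤ p.1 := h
  apply min_eq_left
  nlinarith [mul_nonneg hα.le (sub_nonneg.2 h'), mul_nonneg hβ.le (sub_nonneg.2 h')]

theorem tent_right {p t : A} {α β : ℝ} (hα : 0 < α) (hβ : 0 < β) (h : p ≤ t) :
    min (α * (t.1 - p.1)) (β * (p.1 - t.1)) = β * (p.1 - t.1) := by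
  have h' : p.1 ≤ t.1 := h
  apply min_eq_right
  nlinarith [mul_nonneg hα.le (sub_nonneg.2 h'), mul_nonneg hβ.le (sub_nonneg.2 h')]

theorem P_of_lt {R : Pref} {a b : A} (h : ¬ R.rel b a) : R.P a b :=
  ⟨(R.total a b).resolve_right h, h⟩

theorem tent_peak (p : A) {α β : ℝ} (hα : 0 < α) (hβ : 0 < β) : (tent p α β).IsPeak p := by
  intro a b h
  apply P_of_lt
  simp only [tent, not_le]
  rcases h with ⟨h1, h2⟩ | ⟨h1, h2⟩
  · rw [tent_right hα hβ h1, tent_right hα hβ (h1.trans h2.le)]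
    have h3 : a.1 < b.1 := h2
    exact mul_lt_mul_of_pos_left (by linarith) hβ
  · rw [tent_left hα hβ h2, tent_left hα hβ (h1.le.trans h2)]
    have h3 : b.1 < a.1 := h1
    exact mul_lt_mul_of_pos_left (by linarith) hα

theorem exists_pref (p : A) : ∃ r : S0, r.1.IsPeak p :=
  ⟨⟨tent p 1 1, Or.inl ⟨p, tent_peak p one_pos one_pos⟩⟩, tent_peak p one_pos one_pos⟩

theorem exists_pref_left {w p z : A} (h1 : w < p) (h2 : p < z) :
    ∃ r : S0, r.1.IsPeak p ∧ r.1.P w z := by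
  have h1' : w.1 < p.1 := h1
  have h2' : p.1 < z.1 := h2
  have hα : 0 < z.1 - p.1 := by linarith
  have hβ : 0 < 2 * (p.1 - w.1) := by linarith
  refine ⟨⟨tent p _ _, Or.inl ⟨p, tent_peak p hα hβ⟩⟩, tent_peak p hα hβ, P_of_lt ?_⟩
  simp only [tent, not_le]
  rw [tent_left hα hβ h1.le, tent_right hα hβ h2.le]
  nlinarith [mul_pos hα hβ]

theorem exists_pref_right {w p z : A} (h1 : z < p) (h2 : p < w) :
    ∃ r : S0, r.1.IsPeak p ∧ r.1.P w z := by
  have h1' : z.1 < p.1 := h1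
  have h2' : p.1 < w.1 := h2
  have hα : 0 < 2 * (w.1 - p.1) := by linarith
  have hβ : 0 < p.1 - z.1 := by linarith
  refine ⟨⟨tent p _ _, Or.inl ⟨p, tent_peak p hα hβ⟩⟩, tent_peak p hα hβ, P_of_lt ?_⟩
  simp only [tent, not_le]
  rw [tent_left hα hβ h1.le, tent_right hα hβ h2.le]
  nlinarith [mul_pos hα hβ]

/-- The indifferent preference as an element of the domain. -/
def r0 : S0 := ⟨R0, Or.inr rfl⟩

variable {n : ℕ} {f : (Fin n → S0) → A}

theorem sp (hP : PairwiseSP f) (R : Fin n → S0) (i : Fin n) (r : S0) :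
    (R i).1.rel (f R) (f (Function.update R i r)) := by
  by_contra hc
  refine hP {i} (by simp) (by simp) ⟨R, Function.update R i r, ?_, ?_, ?_⟩
  · intro k hk
    exact Function.update_of_ne (by simpa using hk) _ _
  · intro k hk
    obtain rfl : k = i := by simpa using hk
    exact (P_of_lt hc).1
  · exact ⟨i, by simp, P_of_lt hc⟩

theorem solid (hP : PairwiseSP f) (R : Fin n → S0) (i k : Fin n) (hk : (R k).1 = R0) (r : S0) :
    (R i).1.rel (f R) (f (Function.update R k r)) := by
  by_contra hc
  refine hP {i, k} (by simp) Finset.card_le_two ⟨R, Function.update R k r, ?_, ?_, ?_⟩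
  · intro l hl
    refine Function.update_of_ne ?_ _ _
    rintro rfl
    simp at hl
  · intro l hl
    simp only [Finset.mem_insert, Finset.mem_singleton] at hl
    rcases hl with rfl | rfl
    · exact (P_of_lt hc).1
    · rw [hk]; trivial
  · exact ⟨i, by simp, P_of_lt hc⟩

theorem unanim (hO : Onto f) (hP : PairwiseSP f) {R : Fin n → S0} {a : A} {i : Fin n}
    (hi : (R i).1.IsPeak a) (h : ∀ k, (R k).1 = R0 ∨ (R k).1.IsPeak a) : f R = a := by
  classical
  obtain ⟨R', hR'⟩ := hO a
  have step : ∀ (Q : Fin n → S0) (k : Fin n), f Q = a → (R k).1.IsPeak a →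
      f (Function.update Q k (R k)) = a := by
    intro Q k hQ hk
    have := sp hP (Function.update Q k (R k)) k (Q k)
    simp only [Function.update_self, Function.update_idem, Function.update_eq_self] at this
    by_contra hne
    rcases lt_or_gt_of_ne hne with h1 | h1
    · exact (hk _ _ (Or.inr ⟨h1, le_rfl⟩)).2 (hQ ▸ this)
    · exact (hk _ _ (Or.inl ⟨le_rfl, h1⟩)).2 (hQ ▸ this)
  have key : ∀ T : Finset (Fin n), f (T.piecewise R (Function.update R' i (R i))) = a := by
    intro T
    induction T using Finset.induction_on with
    | empty => rw [Finset.piecewise_empty]; exact step _ _ hR' hi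
    | insert k T hk ih =>
      rw [Finset.piecewise_insert]
      rcases h k with h0 | h0
      · have hki : i ≠ k := by
          rintro rfl
          rw [h0] at hi
          exact R0_not_peak _ hi
        set Q := T.piecewise R (Function.update R' i (R i)) with hQ
        have hQi : Q i = R i := by
          rw [hQ]
          by_cases hiT : i ∈ T <;> simp [hiT]
        have := solid hP (Function.update Q k (R k)) i k (by simpa using h0) (Q k)
        simp only [Function.update_idem, Function.update_eq_self,
          Function.update_of_ne hki, hQi, ih] at this
        exact peak_rel hi this
      · exact step _ _ ih h0
  have := key Finset.univ
  rwa [Finset.piecewise_univ] at this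

theorem eff_low (hO : Onto f) (hP : PairwiseSP f) {R : Fin n → S0} {p : A} {i : Fin n}
    (hi : (R i).1.IsPeak p) (h : ∀ k, (R k).1 = R0 ∨ ∃ q, p ≤ q ∧ (R k).1.IsPeak q) :
    p ≤ f R := by
  classical
  by_contra hc
  rw [not_le] at hc
  have key : ∀ T : Finset (Fin n), ∃ R' : Fin n → S0, (∀ k ∉ T, R' k = R k) ∧
      (∀ k ∈ T, (R' k).1 = R0 ∨ (R' k).1.IsPeak p) ∧ (R' i).1.IsPeak p ∧ f R' = f R := by
    intro T
    induction T using Finset.induction_on with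
    | empty => exact ⟨R, by simp, by simp, hi, rfl⟩
    | insert k T hk ih =>
      obtain ⟨Q, h1, h2, h3, h4⟩ := ih
      have keep : ((Q k).1 = R0 ∨ (Q k).1.IsPeak p) → ∃ R' : Fin n → S0,
          (∀ l ∉ insert k T, R' l = R l) ∧
          (∀ l ∈ insert k T, (R' l).1 = R0 ∨ (R' l).1.IsPeak p) ∧
          (R' i).1.IsPeak p ∧ f R' = f R := by
        intro hQ
        refine ⟨Q, fun l hl => h1 l (fun hh => hl (Finset.mem_insert_of_mem hh)), ?_, h3, h4⟩
        intro l hl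
        rcases Finset.mem_insert.1 hl with rfl | hl
        · exact hQ
        · exact h2 l hl
      have hQk := h1 k hk
      rcases h k with h0 | ⟨q, hpq, hq⟩
      · exact keep (Or.inl (hQk ▸ h0))
      rcases hpq.eq_or_lt with rfl | hpq
      · exact keep (Or.inr (hQk ▸ hq))
      obtain ⟨r, hr, hrP⟩ := exists_pref_left hc hpq
      have hki : i ≠ k := by
        rintro rfl
        rw [hQk] at h3
        exact hpq.ne (peak_unique h3 hq)
      refine ⟨Function.update Q k r, ?_, ?_, ?_, ?_⟩
      · intro l hl
        rw [Finset.mem_insert, not_or] at hl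
        rw [Function.update_of_ne hl.1]
        exact h1 l hl.2
      · intro l hl
        by_cases hlk : l = k
        · subst hlk
          simpa using Or.inr hr
        · rw [Function.update_of_ne hlk]
          exact h2 l ((Finset.mem_insert.1 hl).resolve_left hlk)
      · rw [Function.update_of_ne hki]; exact h3
      · have e1 := sp hP Q k r
        have e2 := sp hP (Function.update Q k r) k (Q k)
        simp only [Function.update_self, Function.update_idem, Function.update_eq_self, h4] at e2
        rw [h4, hQk] at e1
        set c' := f (Function.update Q k r) with hc'
        have hle : c' ≤ q := by
          by_contra hh
          exact hrP.2 (r.1.trans _ _ _ (hr q c' (Or.inl ⟨hpq.le, not_le.1 hh⟩)).1 e2)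
        exact le_antisymm (le_of_rel_right hq hle e1) (le_of_rel_right hr hc.le e2)
  obtain ⟨R', -, h2, h3, h4⟩ := key Finset.univ
  have := unanim hO hP h3 (fun k => h2 k (Finset.mem_univ k))
  rw [← h4, this] at hc
  exact lt_irrefl _ hc

theorem eff_high (hO : Onto f) (hP : PairwiseSP f) {R : Fin n → S0} {p : A} {i : Fin n}
    (hi : (R i).1.IsPeak p) (h : ∀ k, (R k).1 = R0 ∨ ∃ q, q ≤ p ∧ (R k).1.IsPeak q) :
    f R ≤ p := by
  classical
  by_contra hc
  rw [not_le] at hc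
  have key : ∀ T : Finset (Fin n), ∃ R' : Fin n → S0, (∀ k ∉ T, R' k = R k) ∧
      (∀ k ∈ T, (R' k).1 = R0 ∨ (R' k).1.IsPeak p) ∧ (R' i).1.IsPeak p ∧ f R' = f R := by
    intro T
    induction T using Finset.induction_on with
    | empty => exact ⟨R, by simp, by simp, hi, rfl⟩
    | insert k T hk ih =>
      obtain ⟨Q, h1, h2, h3, h4⟩ := ih
      have keep : ((Q k).1 = R0 ∨ (Q k).1.IsPeak p) → ∃ R' : Fin n → S0,
          (∀ l ∉ insert k T, R' l = R l) ∧
          (∀ l ∈ insert k T, (R' l).1 = R0 ∨ (R' l).1.IsPeak p) ∧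
          (R' i).1.IsPeak p ∧ f R' = f R := by
        intro hQ
        refine ⟨Q, fun l hl => h1 l (fun hh => hl (Finset.mem_insert_of_mem hh)), ?_, h3, h4⟩
        intro l hl
        rcases Finset.mem_insert.1 hl with rfl | hl
        · exact hQ
        · exact h2 l hl
      have hQk := h1 k hk
      rcases h k with h0 | ⟨q, hpq, hq⟩
      · exact keep (Or.inl (hQk ▸ h0))
      rcases hpq.eq_or_lt with rfl | hpq
      · exact keep (Or.inr (hQk ▸ hq))
      obtain ⟨r, hr, hrP⟩ := exists_pref_right hpq hc
      have hki : i ≠ k := by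
        rintro rfl
        rw [hQk] at h3
        exact hpq.ne (peak_unique hq h3)
      refine ⟨Function.update Q k r, ?_, ?_, ?_, ?_⟩
      · intro l hl
        rw [Finset.mem_insert, not_or] at hl
        rw [Function.update_of_ne hl.1]
        exact h1 l hl.2
      · intro l hl
        by_cases hlk : l = k
        · subst hlk
          simpa using Or.inr hr
        · rw [Function.update_of_ne hlk]
          exact h2 l ((Finset.mem_insert.1 hl).resolve_left hlk)
      · rw [Function.update_of_ne hki]; exact h3
      · have e1 := sp hP Q k r
        have e2 := sp hP (Function.update Q k r) k (Q k)
        simp only [Function.update_self, Function.update_idem, Function.update_eq_self, h4] at e2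
        rw [h4, hQk] at e1
        set c' := f (Function.update Q k r) with hc'
        have hle : q ≤ c' := by
          by_contra hh
          exact hrP.2 (r.1.trans _ _ _ (hr q c' (Or.inr ⟨not_le.1 hh, hpq.le⟩)).1 e2)
        exact le_antisymm (le_of_rel_left hr hc.le e2) (le_of_rel_left hq hle e1)
  obtain ⟨R', -, h2, h3, h4⟩ := key Finset.univ
  have := unanim hO hP h3 (fun k => h2 k (Finset.mem_univ k))
  rw [← h4, this] at hc
  exact lt_irrefl _ hc

/-- A preference that is admissible between `a` and `b`. -/
def Adm (a b : A) (r : S0) : Prop := r.1 = R0 ∨ ∃ c, a ≤ c ∧ c ≤ b ∧ r.1.IsPeak c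

/-- `i`, `j` have extreme peaks `a`, `b` in the profile `R`. -/
structure Ext (R : Fin n → S0) (i : Fin n) (a : A) (j : Fin n) (b : A) : Prop where
  lo : (R i).1.IsPeak a
  hi : (R j).1.IsPeak b
  mid : ∀ k, Adm a b (R k)

theorem Ext.le {R : Fin n → S0} {i j : Fin n} {a b : A} (h : Ext R i a j b) : a ≤ b := by
  rcases h.mid i with h0 | ⟨c, h1, h2, h3⟩
  · exact absurd (h0 ▸ h.lo) (R0_not_peak a)
  · exact h1.trans h2

theorem Ext.ne {R : Fin n → S0} {i j : Fin n} {a b : A} (h : Ext R i a j b) (hab : a < b) :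
    i ≠ j := by
  rintro rfl
  exact hab.ne (peak_unique h.lo h.hi)

theorem Ext.upd {R : Fin n → S0} {i j : Fin n} {a b : A} (h : Ext R i a j b) {k : Fin n}
    (hi : k ≠ i) (hj : k ≠ j) {r : S0} (hr : Adm a b r) : Ext (Function.update R k r) i a j b := by
  refine ⟨?_, ?_, ?_⟩
  · rw [Function.update_of_ne hi.symm]; exact h.lo
  · rw [Function.update_of_ne hj.symm]; exact h.hi
  · intro l
    by_cases hl : l = k
    · subst hl; simpa using hr
    · rw [Function.update_of_ne hl]; exact h.mid l

theorem Ext.low (hO : Onto f) (hP : PairwiseSP f) {R : Fin n → S0} {i j : Fin n} {a b : A}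
    (h : Ext R i a j b) : a ≤ f R :=
  eff_low hO hP h.lo fun k => (h.mid k).imp id fun ⟨c, h1, _, h3⟩ => ⟨c, h1, h3⟩

theorem Ext.high (hO : Onto f) (hP : PairwiseSP f) {R : Fin n → S0} {i j : Fin n} {a b : A}
    (h : Ext R i a j b) : f R ≤ b :=
  eff_high hO hP h.hi fun k => (h.mid k).imp id fun ⟨c, _, h2, h3⟩ => ⟨c, h2, h3⟩

theorem Ext.drop (hO : Onto f) (hP : PairwiseSP f) {R : Fin n → S0} {i j : Fin n} {a b : A}
    (h : Ext R i a j b) {k : Fin n} (hi : k ≠ i) (hj : k ≠ j) :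
    f (Function.update R k r0) = f R := by
  have e1 := solid hP (Function.update R k r0) i k (by rw [Function.update_self]; rfl) (R k)
  have e2 := solid hP (Function.update R k r0) j k (by rw [Function.update_self]; rfl) (R k)
  simp only [Function.update_idem, Function.update_eq_self, Function.update_of_ne hi.symm,
    Function.update_of_ne hj.symm] at e1 e2
  exact le_antisymm (le_of_rel_left h.lo (h.low hO hP) e1) (le_of_rel_right h.hi (h.high hO hP) e2)

theorem Ext.change (hO : Onto f) (hP : PairwiseSP f) {R : Fin n → S0} {i j : Fin n} {a b : A}
    (h : Ext R i a j b) {k : Fin n} (hi : k ≠ i) (hj : k ≠ j) {r : S0} (hr : Adm a b r) :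
    f (Function.update R k r) = f R := by
  have := (h.upd hi hj hr).drop hO hP hi hj
  rw [Function.update_idem] at this
  rw [← this, h.drop hO hP hi hj]

theorem Ext.same (hO : Onto f) (hP : PairwiseSP f) {R R' : Fin n → S0} {i j : Fin n} {a b : A}
    (h : Ext R i a j b) (h' : Ext R' i a j b) (hi : R i = R' i) (hj : R j = R' j) :
    f R = f R' := by
  classical
  have key : ∀ T : Finset (Fin n), f (T.piecewise R' R) = f R ∧ Ext (T.piecewise R' R) i a j b := by
    intro T
    induction T using Finset.induction_on with
    | empty => rw [Finset.piecewise_empty]; exact ⟨rfl, h⟩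
    | insert k T hk ih =>
      rw [Finset.piecewise_insert]
      by_cases hki : k = i
      · subst hki
        have : Function.update (T.piecewise R' R) k (R' k) = T.piecewise R' R := by
          rw [← hi, Function.update_eq_self_iff, Finset.piecewise_eq_of_notMem _ _ _ hk]
        rw [this]; exact ih
      by_cases hkj : k = j
      · subst hkj
        have : Function.update (T.piecewise R' R) k (R' k) = T.piecewise R' R := by
          rw [← hj, Function.update_eq_self_iff, Finset.piecewise_eq_of_notMem _ _ _ hk]
        rw [this]; exact ih
      exact ⟨(ih.2.change hO hP hki hkj (h'.mid k)).trans ih.1, ih.2.upd hki hkj (h'.mid k)⟩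
  have := (key Finset.univ).1
  rw [Finset.piecewise_univ] at this
  exact this.symm

theorem Ext.swapI (hO : Onto f) (hP : PairwiseSP f) {R R' : Fin n → S0} {i i' j : Fin n} {a b : A}
    (hab : a < b) (h : Ext R i a j b) (h' : Ext R' i' a j b) (hj : R j = R' j) (hne : i' ≠ i) :
    f R = f R' := by
  have h1 := h'.ne hab
  rw [← h.change hO hP hne h1 (h'.mid i')]
  have hu := h.upd hne h1 (h'.mid i')
  refine Ext.same hO hP (i := i') (j := j) (a := a) (b := b) ⟨?_, hu.hi, hu.mid⟩ h' (by simp) ?_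
  · simpa using h'.lo
  · rw [Function.update_of_ne h1.symm, hj]

theorem Ext.swapJ (hO : Onto f) (hP : PairwiseSP f) {R R' : Fin n → S0} {i j j' : Fin n} {a b : A}
    (hab : a < b) (h : Ext R i a j b) (h' : Ext R' i a j' b) (hi : R i = R' i) (hne : j' ≠ j) :
    f R = f R' := by
  have h1 := (h'.ne hab).symm
  rw [← h.change hO hP h1 hne (h'.mid j')]
  have hu := h.upd h1 hne (h'.mid j')
  refine Ext.same hO hP (i := i) (j := j') (a := a) (b := b) ⟨hu.lo, ?_, hu.mid⟩ h' ?_ (by simp)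
  · simpa using h'.hi
  · rw [Function.update_of_ne h1.symm, hi]

theorem third (hn : 3 ≤ n) (i j : Fin n) : ∃ k : Fin n, k ≠ i ∧ k ≠ j := by
  have : ∃ k ∉ ({i, j} : Finset (Fin n)), True := by
    by_contra hc
    push Not at hc
    have h1 : (Finset.univ : Finset (Fin n)) ⊆ {i, j} := by
      intro k _
      by_contra hk
      exact hc k hk
    have h2 := Finset.card_le_card h1
    have h3 := Finset.card_le_two (a := i) (b := j)
    simp at h2
    omega
  obtain ⟨k, hk, -⟩ := this
  exact ⟨k, by simpa using hk⟩

/-- Two-agent profile. -/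
def base (i j : Fin n) (r s : S0) : Fin n → S0 :=
  Function.update (Function.update (fun _ => r0) j s) i r

theorem base_i (i j : Fin n) (r s : S0) : base i j r s i = r := by simp [base]
theorem base_j {i j : Fin n} (h : i ≠ j) (r s : S0) : base i j r s j = s := by
  simp [base, Function.update_of_ne h.symm]

theorem base_k {i j k : Fin n} (h : k ≠ i) (h' : k ≠ j) (r s : S0) : base i j r s k = r0 := by
  simp [base, Function.update_of_ne h, Function.update_of_ne h']

theorem base_ext {i j : Fin n} (h : i ≠ j) {r s : S0} {a b : A} (hab : a ≤ b)
    (hr : r.1.IsPeak a) (hs : s.1.IsPeak b) : Ext (base i j r s) i a j b := by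
  refine ⟨by rwa [base_i], by rwa [base_j h], fun k => ?_⟩
  by_cases hi : k = i
  · subst hi; rw [base_i]; exact Or.inr ⟨a, le_rfl, hab, hr⟩
  by_cases hj : k = j
  · subst hj; rw [base_j h]; exact Or.inr ⟨b, hab, le_rfl, hs⟩
  rw [base_k hi hj]; exact Or.inl rfl

theorem Ext.swapI' (hn : 3 ≤ n) (hO : Onto f) (hP : PairwiseSP f) {R R' : Fin n → S0}
    {i i' j : Fin n} {a b : A}
    (hab : a < b) (h : Ext R i a j b) (h' : Ext R' i' a j b) (hj : R j = R' j) :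
    f R = f R' := by
  by_cases hne : i' = i
  · subst hne
    obtain ⟨k, hki, hkj⟩ := third hn i' j
    obtain ⟨r, hr⟩ := exists_pref a
    have hB := base_ext hkj hab.le hr h.hi
    rw [h.swapI hO hP hab hB (base_j hkj _ _).symm hki]
    exact hB.swapI hO hP hab h' ((base_j hkj _ _).trans hj) hki.symm
  · exact h.swapI hO hP hab h' hj hne

theorem Ext.swapJ' (hn : 3 ≤ n) (hO : Onto f) (hP : PairwiseSP f) {R R' : Fin n → S0}
    {i j j' : Fin n} {a b : A}
    (hab : a < b) (h : Ext R i a j b) (h' : Ext R' i a j' b) (hi : R i = R' i) :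
    f R = f R' := by
  by_cases hne : j' = j
  · subst hne
    obtain ⟨k, hki, hkj⟩ := third hn i j'
    obtain ⟨r, hr⟩ := exists_pref b
    have hB := base_ext hki.symm hab.le h.lo hr
    rw [h.swapJ hO hP hab hB (base_i _ _ _ _).symm hkj]
    exact hB.swapJ hO hP hab h' ((base_i _ _ _ _).trans hi) hkj.symm
  · exact h.swapJ hO hP hab h' hi hne

theorem Ext.eq_aux (hn : 3 ≤ n) (hO : Onto f) (hP : PairwiseSP f) {R R' : Fin n → S0}
    {i j i' j' : Fin n} {a b : A} (hab : a < b) (h : Ext R i a j b) (h' : Ext R' i' a j' b)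
    (hne : i' ≠ j) : f R = f R' := by
  have hB := base_ext hne hab.le h'.lo h.hi
  rw [h.swapI' hn hO hP hab hB (base_j hne _ _).symm]
  exact hB.swapJ' hn hO hP hab h' (base_i _ _ _ _)

theorem Ext.eq (hn : 3 ≤ n) (hO : Onto f) (hP : PairwiseSP f) {R R' : Fin n → S0}
    {i j i' j' : Fin n} {a b : A} (h : Ext R i a j b) (h' : Ext R' i' a j' b) : f R = f R' := by
  rcases h.le.eq_or_lt with rfl | hab
  · rw [le_antisymm (h.high hO hP) (h.low hO hP), le_antisymm (h'.high hO hP) (h'.low hO hP)]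
  by_cases hne : i' = j
  · subst hne
    obtain ⟨k, hki, hkj⟩ := third hn i i'
    have hB := base_ext hki hab.le h.lo h.hi
    rw [h.eq_aux hn hO hP hab hB hkj]
    exact hB.eq_aux hn hO hP hab h' (h.ne hab).symm
  · exact h.eq_aux hn hO hP hab h' hne

theorem Ext.max_eq (hn : 3 ≤ n) (hO : Onto f) (hP : PairwiseSP f) {R R' : Fin n → S0}
    {i j i' j' : Fin n} {a b c : A} (h : Ext R i a j b) (h' : Ext R' i' c j' b) (hca : c ≤ a) :
    f R = max a (f R') := by
  rcases h.le.eq_or_lt with rfl | hab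
  · rw [le_antisymm (h.high hO hP) (h.low hO hP), max_eq_left (h'.high hO hP)]
  have hij := h.ne hab
  obtain ⟨k, hki, hkj⟩ := third hn i j
  obtain ⟨s, hs⟩ := exists_pref b
  obtain ⟨t, ht⟩ := exists_pref c
  have main : ∀ r : S0, r.1.IsPeak a → r.1.rel (f R) (f R') ∧ s.1.rel (f R) (f R') := by
    intro r hr
    have hB := base_ext hij hab.le hr hs
    have hC : Ext (Function.update (base i j r s) k t) k c j b := by
      refine ⟨by simpa using ht, ?_, fun l => ?_⟩
      · rw [Function.update_of_ne hkj.symm]; exact hB.hi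
      · by_cases hl : l = k
        · subst hl
          rw [Function.update_self]
          exact Or.inr ⟨c, le_rfl, hca.trans hab.le, ht⟩
        · rw [Function.update_of_ne hl]
          exact (hB.mid l).imp id fun ⟨d, h1, h2, h3⟩ => ⟨d, hca.trans h1, h2, h3⟩
    rw [h.eq hn hO hP hB, h'.eq hn hO hP hC]
    have e0 : (base i j r s k).1 = R0 := by rw [base_k hki hkj]; rfl
    have e1 := solid hP (base i j r s) i k e0 t
    have e2 := solid hP (base i j r s) j k e0 t
    rw [base_i] at e1
    rw [base_j hij] at e2
    exact ⟨e1, e2⟩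
  have hz := h.low hO hP
  rcases le_or_gt a (f R') with hw | hw
  · rw [max_eq_right hw]
    obtain ⟨r, hr⟩ := exists_pref a
    obtain ⟨e1, e2⟩ := main r hr
    exact le_antisymm (le_of_rel_left hr hw e1) (le_of_rel_right hs (h'.high hO hP) e2)
  · rw [max_eq_left hw.le]
    by_contra hne
    obtain ⟨r, hr, hrP⟩ := exists_pref_left hw (lt_of_le_of_ne hz (Ne.symm hne))
    exact hrP.2 (main r hr).1

theorem Ext.min_eq (hn : 3 ≤ n) (hO : Onto f) (hP : PairwiseSP f) {R R' : Fin n → S0}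
    {i j i' j' : Fin n} {a b c : A} (h : Ext R i a j b) (h' : Ext R' i' a j' c) (hbc : b ≤ c) :
    f R = min b (f R') := by
  rcases h.le.eq_or_lt with rfl | hab
  · rw [le_antisymm (h.high hO hP) (h.low hO hP), min_eq_left (h'.low hO hP)]
  have hij := h.ne hab
  obtain ⟨k, hki, hkj⟩ := third hn i j
  obtain ⟨s, hs⟩ := exists_pref a
  obtain ⟨t, ht⟩ := exists_pref c
  have main : ∀ r : S0, r.1.IsPeak b → r.1.rel (f R) (f R') ∧ s.1.rel (f R) (f R') := by
    intro r hr
    have hB := base_ext hij hab.le hs hr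
    have hC : Ext (Function.update (base i j s r) k t) i a k c := by
      refine ⟨?_, by simpa using ht, fun l => ?_⟩
      · rw [Function.update_of_ne hki.symm]; exact hB.lo
      · by_cases hl : l = k
        · subst hl
          rw [Function.update_self]
          exact Or.inr ⟨c, hab.le.trans hbc, le_rfl, ht⟩
        · rw [Function.update_of_ne hl]
          exact (hB.mid l).imp id fun ⟨d, h1, h2, h3⟩ => ⟨d, h1, h2.trans hbc, h3⟩
    rw [h.eq hn hO hP hB, h'.eq hn hO hP hC]
    have e0 : (base i j s r k).1 = R0 := by rw [base_k hki hkj]; rfl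
    have e1 := solid hP (base i j s r) i k e0 t
    have e2 := solid hP (base i j s r) j k e0 t
    rw [base_i] at e1
    rw [base_j hij] at e2
    exact ⟨e2, e1⟩
  have hz := h.high hO hP
  rcases le_or_gt (f R') b with hw | hw
  · rw [min_eq_right hw]
    obtain ⟨r, hr⟩ := exists_pref b
    obtain ⟨e1, e2⟩ := main r hr
    exact le_antisymm (le_of_rel_left hs (h'.low hO hP) e2) (le_of_rel_right hr hw e1)
  · rw [min_eq_left hw.le]
    by_contra hne
    obtain ⟨r, hr, hrP⟩ := exists_pref_right (lt_of_le_of_ne hz hne) hw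
    exact hrP.2 (main r hr).1

theorem isPeak_peak (r : S0) (h : r.1 ≠ R0) : r.1.IsPeak (peak r.1) := by
  obtain ⟨p, hp⟩ := r.2.resolve_right h
  rw [peak_spec hp]; exact hp

theorem exists_ext {R : Fin n → S0} (hR : R ≠ indiffProfile n) :
    ∃ i a j b, Ext R i a j b ∧ tmin R = (a : ℝ) ∧ tmax R = (b : ℝ) := by
  classical
  have hne : (Finset.univ.filter fun i => (R i).1 ≠ R0).Nonempty := by
    by_contra hc
    rw [Finset.not_nonempty_iff_eq_empty, Finset.filter_eq_empty_iff] at hc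
    apply hR
    funext i
    have := hc (Finset.mem_univ i)
    exact Subtype.ext (not_not.1 this)
  obtain ⟨i, hi, hmin⟩ := Finset.exists_min_image _ (fun i => peak (R i).1) hne
  obtain ⟨j, hj, hmax⟩ := Finset.exists_max_image _ (fun i => peak (R i).1) hne
  simp only [Finset.mem_filter, Finset.mem_univ, true_and] at hi hj hmin hmax
  refine ⟨i, _, j, _, ⟨isPeak_peak _ hi, isPeak_peak _ hj, fun k => ?_⟩, ?_, ?_⟩
  · by_cases hk : (R k).1 = R0
    · exact Or.inl hk
    · exact Or.inr ⟨_, hmin k hk, hmax k hk, isPeak_peak _ hk⟩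
  · apply IsLeast.csInf_eq
    refine ⟨⟨i, hi, rfl⟩, ?_⟩
    rintro _ ⟨k, hk, rfl⟩
    exact hmin k hk
  · apply IsGreatest.csSup_eq
    refine ⟨⟨j, hj, rfl⟩, ?_⟩
    rintro _ ⟨k, hk, rfl⟩
    exact hmax k hk

end TR

/-- For n ≥ 3, every onto and pairwise strategy-proof SCF is a
target rule with a default. -/
theorem stmt_0 (n : ℕ) (hn : 3 ≤ n) (f : (Fin n → S0) → A)
    (hOnto : Onto f) (hPSP : PairwiseSP f) : IsTargetRule f := by
  classical
  obtain ⟨r, hr⟩ := TR.exists_pref zeroA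
  obtain ⟨s, hs⟩ := TR.exists_pref oneA
  have h0 : ∀ a : A, zeroA ≤ a := fun a => a.2.1
  have h1 : ∀ a : A, a ≤ oneA := fun a => a.2.2
  let i0 : Fin n := ⟨0, by omega⟩
  let j0 : Fin n := ⟨1, by omega⟩
  have hij : i0 ≠ j0 := by simp [i0, j0]
  have hB := TR.base_ext hij (h0 oneA) hr hs
  refine ⟨f (TR.base i0 j0 r s), _, rfl, fun R hR => ?_⟩
  obtain ⟨i, a, j, b, hE, ha, hb⟩ := TR.exists_ext hR
  obtain ⟨t, ht⟩ := TR.exists_pref b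
  have hC := TR.base_ext hij (h0 b) hr ht
  have e1 := hE.max_eq hn hOnto hPSP hC (h0 a)
  have e2 := hC.min_eq hn hOnto hPSP hB (h1 b)
  rw [e2] at e1
  set x := f (TR.base i0 j0 r s)
  have hab := hE.le
  rw [ha, hb, e1]
  refine ⟨?_, ?_, ?_⟩
  · rintro ⟨p, q⟩
    have p' : a ≤ x := p
    have q' : x ≤ b := q
    rw [min_eq_right q', max_eq_right p']
  · intro p
    have p' : x < a := p
    rw [min_eq_right (p'.le.trans hab), max_eq_left p'.le]
  · intro p
    have p' : b < x := p
    rw [min_eq_left p'.le, max_eq_right hab]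
end

section
/- Let n ≥ 2. Every target rule with a default f : S₀ⁿ → A is onto and pairwise strategy-proof. -/
lemma not_R0_of_P {R : Pref} {a b : A} (h : R.P a b) : R ≠ R0 := by
  rintro rfl
  exact h.2 trivial

lemma isPeak_peak (R : S0) (h : R.1 ≠ R0) : R.1.IsPeak (peak R.1) := by
  have hs : SinglePeaked R.1 := R.2.resolve_right h
  unfold peak
  rw [dif_pos hs]
  exact hs.choose_spec

/-- The set of peaks of the non-indifferent agents. -/
def peakSet {n : ℕ} (R : Fin n → S0) : Set ℝ :=
  {x : ℝ | ∃ i : Fin n, (R i).1 ≠ R0 ∧ ((peak (R i).1 : ℝ) = x)}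

lemma peakSet_finite {n : ℕ} (R : Fin n → S0) : (peakSet R).Finite := by
  refine (Set.finite_range (fun i : Fin n => (peak (R i).1 : ℝ))).subset ?_
  rintro x ⟨i, _, rfl⟩
  exact ⟨i, rfl⟩

lemma exists_ne_R0 {n : ℕ} {R : Fin n → S0} (h : R ≠ indiffProfile n) :
    ∃ i, (R i).1 ≠ R0 := by
  by_contra hc
  push Not at hc
  exact h (funext fun i => Subtype.ext (hc i))

lemma ne_indiff {n : ℕ} {R : Fin n → S0} {i : Fin n} (h : (R i).1 ≠ R0) :
    R ≠ indiffProfile n := by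
  rintro rfl
  exact h rfl

lemma tmin_le {n : ℕ} {R : Fin n → S0} {i : Fin n} (h : (R i).1 ≠ R0) :
    tmin R ≤ peak (R i).1 :=
  csInf_le (peakSet_finite R).bddBelow ⟨i, h, rfl⟩

lemma le_tmax {n : ℕ} {R : Fin n → S0} {i : Fin n} (h : (R i).1 ≠ R0) :
    (peak (R i).1 : ℝ) ≤ tmax R :=
  le_csSup (peakSet_finite R).bddAbove ⟨i, h, rfl⟩

lemma tmin_mem {n : ℕ} {R : Fin n → S0} (h : R ≠ indiffProfile n) :
    ∃ i, (R i).1 ≠ R0 ∧ (peak (R i).1 : ℝ) = tmin R := by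
  obtain ⟨i, hi⟩ := exists_ne_R0 h
  exact Set.Nonempty.csInf_mem (s := peakSet R) ⟨_, i, hi, rfl⟩ (peakSet_finite R)

lemma tmax_mem {n : ℕ} {R : Fin n → S0} (h : R ≠ indiffProfile n) :
    ∃ i, (R i).1 ≠ R0 ∧ (peak (R i).1 : ℝ) = tmax R := by
  obtain ⟨i, hi⟩ := exists_ne_R0 h
  exact Set.Nonempty.csSup_mem (s := peakSet R) ⟨_, i, hi, rfl⟩ (peakSet_finite R)

/-- The summary of the behaviour of a target rule used in the proof. -/
lemma target_char {n : ℕ} {f : (Fin n → S0) → A} {x : A} {R : Fin n → S0}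
    (h : R ≠ indiffProfile n)
    (hf : ((tmin R ≤ (x : ℝ) ∧ (x : ℝ) ≤ tmax R) → f R = x) ∧
      ((x : ℝ) < tmin R → (f R : ℝ) = tmin R) ∧
      (tmax R < (x : ℝ) → (f R : ℝ) = tmax R)) :
    tmin R ≤ f R ∧ (f R : ℝ) ≤ tmax R ∧
      ((f R : ℝ) < x → (f R : ℝ) = tmax R) ∧ ((x : ℝ) < f R → (f R : ℝ) = tmin R) := by
  obtain ⟨i, hi⟩ := exists_ne_R0 h
  have h1 := tmin_le hi
  have h2 := le_tmax hi
  obtain ⟨a, b, c⟩ := hf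
  rcases lt_or_ge (x : ℝ) (tmin R) with hx | hx
  · have := b hx
    refine ⟨by linarith, by linarith, fun _ => by linarith, fun _ => this⟩
  rcases lt_or_ge (tmax R) (x : ℝ) with hy | hy
  · have := c hy
    refine ⟨by linarith, by linarith, fun _ => this, fun _ => by linarith⟩
  · rw [a ⟨hx, hy⟩]
    exact ⟨hx, hy, fun h => absurd h (lt_irrefl _), fun h => absurd h (lt_irrefl _)⟩

/-- Euclidean preference with peak `p`. -/
def euclid (p : A) : Pref where
  rel a b := |(a : ℝ) - p| ≤ |(b : ℝ) - p|
  total a b := le_total _ _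
  trans a b c h1 h2 := le_trans h1 h2

lemma euclid_isPeak (p : A) : (euclid p).IsPeak p := by
  intro a b h
  have key : |(a : ℝ) - p| < |(b : ℝ) - p| := by
    rcases h with ⟨h1, h2⟩ | ⟨h1, h2⟩
    · have h1' : (p : ℝ) ≤ a := h1
      have h2' : (a : ℝ) < b := h2
      rw [abs_of_nonneg (by linarith), abs_of_nonneg (by linarith)]
      linarith
    · have h1' : (b : ℝ) < a := h1
      have h2' : (a : ℝ) ≤ p := h2
      rw [abs_of_nonpos (by linarith), abs_of_nonpos (by linarith)]
      linarith
  exact ⟨key.le, not_le.mpr key⟩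

lemma euclid_ne (p : A) : euclid p ≠ R0 := by
  intro h
  have h01 : ∀ a b : A, (euclid p).rel a b := by
    intro a b
    rw [h]
    trivial
  have h0 : |(0 : ℝ) - p| ≤ |(p : ℝ) - p| := h01 zeroA p
  have h1 : |(1 : ℝ) - p| ≤ |(p : ℝ) - p| := h01 oneA p
  rw [sub_self, abs_zero] at h0 h1
  have e0 := abs_nonpos_iff.mp h0
  have e1 := abs_nonpos_iff.mp h1
  linarith

lemma isPeak_unique {R : Pref} {p q : A} (hp : R.IsPeak p) (hq : R.IsPeak q) : p = q := by
  rcases lt_trichotomy p q with h | h | h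
  · exact absurd (hp p q (Or.inl ⟨le_rfl, h⟩)).1 (hq q p (Or.inr ⟨h, le_rfl⟩)).2
  · exact h
  · exact absurd (hp p q (Or.inr ⟨h, le_rfl⟩)).1 (hq q p (Or.inl ⟨le_rfl, h⟩)).2

/-- Target rules are group strategy-proof. -/
lemma target_coalitionSP {n : ℕ} {f : (Fin n → S0) → A} (hT : IsTargetRule f)
    (S : Finset (Fin n)) : CoalitionSP f S := by
  obtain ⟨x, y, -, hf⟩ := hT
  rintro ⟨R, R', hout, hin, j, hjS, hj⟩
  have hj0 := not_R0_of_P hj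
  have hR := ne_indiff hj0
  obtain ⟨c1, c2, c3, c4⟩ := target_char hR (hf R hR)
  have hjp := isPeak_peak _ hj0
  have hjl := tmin_le hj0
  have hju := le_tmax hj0
  rcases lt_trichotomy (f R) (f R') with h | h | h
  · obtain ⟨i, hi0, hi⟩ := tmin_mem hR
    have hiS : i ∉ S := fun hiS =>
      (isPeak_peak _ hi0 (f R) (f R')
        (Or.inl ⟨Subtype.coe_le_coe.mp (by rw [hi]; exact c1), h⟩)).2 (hin i hiS)
    have hi0' : (R' i).1 ≠ R0 := by rw [hout i hiS]; exact hi0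
    have hR' := ne_indiff hi0'
    obtain ⟨d1, d2, d3, d4⟩ := target_char hR' (hf R' hR')
    have hm := tmin_le hi0'
    rw [hout i hiS, hi] at hm
    have h' : (f R : ℝ) < f R' := h
    have hx : (f R' : ℝ) ≤ x := by
      by_contra hc
      have := d4 (not_le.mp hc)
      linarith
    have := c3 (by linarith)
    exact (hjp (f R) (f R') (Or.inl ⟨Subtype.coe_le_coe.mp (by linarith), h⟩)).2 hj.1
  · rw [h] at hj
    exact hj.2 hj.1
  · obtain ⟨i, hi0, hi⟩ := tmax_mem hR
    have hiS : i ∉ S := fun hiS =>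
      (isPeak_peak _ hi0 (f R) (f R')
        (Or.inr ⟨h, Subtype.coe_le_coe.mp (by rw [hi]; exact c2)⟩)).2 (hin i hiS)
    have hi0' : (R' i).1 ≠ R0 := by rw [hout i hiS]; exact hi0
    have hR' := ne_indiff hi0'
    obtain ⟨d1, d2, d3, d4⟩ := target_char hR' (hf R' hR')
    have hm := le_tmax hi0'
    rw [hout i hiS, hi] at hm
    have h' : (f R' : ℝ) < f R := h
    have hx : (x : ℝ) ≤ f R' := by
      by_contra hc
      have := d3 (not_le.mp hc)
      linarith
    have := c4 (by linarith)
    exact (hjp (f R) (f R') (Or.inr ⟨h, Subtype.coe_le_coe.mp (by linarith)⟩)).2 hj.1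

/-- For n ≥ 2, every target rule with a default is onto and
pairwise strategy-proof. -/
theorem stmt_1 (n : ℕ) (hn : 2 ≤ n) (f : (Fin n → S0) → A)
    (hT : IsTargetRule f) : Onto f ∧ PairwiseSP f := by
  refine ⟨fun a => ?_, fun S _ _ => target_coalitionSP hT S⟩
  obtain ⟨x, y, -, hf⟩ := hT
  let E : S0 := ⟨euclid a, Or.inl ⟨a, euclid_isPeak a⟩⟩
  have hE : peak E.1 = a := isPeak_unique (isPeak_peak E (euclid_ne a)) (euclid_isPeak a)
  let R : Fin n → S0 := fun _ => E
  have hR : R ≠ indiffProfile n := ne_indiff (i := ⟨0, by omega⟩) (euclid_ne a)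
  obtain ⟨c1, c2, -, -⟩ := target_char hR (hf R hR)
  obtain ⟨i, -, hi⟩ := tmin_mem hR
  obtain ⟨k, -, hk⟩ := tmax_mem hR
  have hi' : (a : ℝ) = tmin R := by rw [← hi, ← hE]
  have hk' : (a : ℝ) = tmax R := by rw [← hk, ← hE]
  exact ⟨R, Subtype.ext (by linarith)⟩
end

section
/- Let n ≥ 2. Every target rule with a default f : S₀ⁿ → A is group strategy-proof. -/
theorem peak_isPeak (Q : S0) (h : Q.1 ≠ R0) : Q.1.IsPeak (peak Q.1) := by
  have hs : SinglePeaked Q.1 := Q.2.resolve_right h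
  unfold peak
  rw [dif_pos hs]
  exact hs.choose_spec

theorem target_key {n : ℕ} (f : (Fin n → S0) → A) (x : A) (R : Fin n → S0)
    (hne : ∃ i, (R i).1 ≠ R0)
    (h : ((tmin R ≤ (x : ℝ) ∧ (x : ℝ) ≤ tmax R) → f R = x) ∧
      ((x : ℝ) < tmin R → (f R : ℝ) = tmin R) ∧
      (tmax R < (x : ℝ) → (f R : ℝ) = tmax R)) :
    (∃ i, (R i).1 ≠ R0 ∧ peak (R i).1 ≤ f R) ∧
    (∃ i, (R i).1 ≠ R0 ∧ f R ≤ peak (R i).1) ∧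
    (f R < x → ∀ i, (R i).1 ≠ R0 → peak (R i).1 ≤ f R) ∧
    (x < f R → ∀ i, (R i).1 ≠ R0 → f R ≤ peak (R i).1) := by
  obtain ⟨h1, h2, h3⟩ := h
  have hfin : {x : ℝ | ∃ i : Fin n, (R i).1 ≠ R0 ∧ ((peak (R i).1 : ℝ) = x)}.Finite := by
    refine (Set.finite_range (fun i : Fin n => (peak (R i).1 : ℝ))).subset ?_
    rintro _ ⟨i, _, rfl⟩
    exact ⟨i, rfl⟩
  have hnon : {x : ℝ | ∃ i : Fin n, (R i).1 ≠ R0 ∧ ((peak (R i).1 : ℝ) = x)}.Nonempty := by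
    obtain ⟨i, hi⟩ := hne
    exact ⟨_, i, hi, rfl⟩
  obtain ⟨a, ha, hamin⟩ := hnon.csInf_mem hfin
  obtain ⟨b, hb, hbmax⟩ := hnon.csSup_mem hfin
  have hlo : ∀ i, (R i).1 ≠ R0 → tmin R ≤ (peak (R i).1 : ℝ) :=
    fun i hi => csInf_le hfin.bddBelow ⟨i, hi, rfl⟩
  have hup : ∀ i, (R i).1 ≠ R0 → (peak (R i).1 : ℝ) ≤ tmax R :=
    fun i hi => le_csSup hfin.bddAbove ⟨i, hi, rfl⟩
  change (peak (R a).1 : ℝ) = tmin R at hamin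
  change (peak (R b).1 : ℝ) = tmax R at hbmax
  have hle : tmin R ≤ tmax R := (hlo a ha).trans (hup a ha)
  simp only [← Subtype.coe_le_coe, ← Subtype.coe_lt_coe]
  rcases lt_or_ge (x : ℝ) (tmin R) with hx | hx
  · have e := h2 hx
    refine ⟨⟨a, ha, by linarith⟩, ⟨b, hb, by linarith⟩, fun _ => by linarith,
      fun _ i hi => by linarith [hlo i hi]⟩
  rcases lt_or_ge (tmax R) (x : ℝ) with hx' | hx'
  · have e := h3 hx'
    refine ⟨⟨a, ha, by linarith⟩, ⟨b, hb, by linarith⟩, fun _ i hi => by linarith [hup i hi],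
      fun _ => by linarith⟩
  · have e := h1 ⟨hx, hx'⟩
    rw [e]
    exact ⟨⟨a, ha, by linarith⟩, ⟨b, hb, by linarith⟩, fun h => absurd h (lt_irrefl _),
      fun h => absurd h (lt_irrefl _)⟩

/-- For n ≥ 2, every target rule with a default is group
strategy-proof. -/
theorem stmt_2 (n : ℕ) (hn : 2 ≤ n) (f : (Fin n → S0) → A)
    (hT : IsTargetRule f) : GroupSP f := by
  obtain ⟨x, y, -, hf⟩ := hT
  have key : ∀ R : Fin n → S0, (∃ i, (R i).1 ≠ R0) → _ := fun R hne =>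
    target_key f x R hne (hf R (by
      rintro rfl
      obtain ⟨i, hi⟩ := hne
      exact hi rfl))
  rintro S - ⟨R, R', hout, hin, j, hj, hjP⟩
  have hj0 : (R j).1 ≠ R0 := by
    intro h
    rw [h] at hjP
    exact hjP.2 trivial
  obtain ⟨⟨a, ha, hac⟩, ⟨b, hb, hbc⟩, hlt, hgt⟩ := key R ⟨j, hj0⟩
  rcases lt_trichotomy (f R) (f R') with hd | hd | hd
  · have hstay : R' a = R a := by
      refine hout a fun haS => ?_
      exact (peak_isPeak (R a) ha _ _ (Or.inl ⟨hac, hd⟩)).2 (hin a haS)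
    have ha' : (R' a).1 ≠ R0 := by rw [hstay]; exact ha
    obtain ⟨-, -, -, hgt'⟩ := key R' ⟨a, ha'⟩
    have hdx : f R' ≤ x := by
      by_contra hx
      have h1 := hgt' (not_le.mp hx) a ha'
      rw [hstay] at h1
      exact absurd (h1.trans hac) (not_le.mpr hd)
    exact (peak_isPeak (R j) hj0 _ _
      (Or.inl ⟨hlt (hd.trans_le hdx) j hj0, hd⟩)).2 hjP.1
  · rw [hd] at hjP
    exact hjP.2 hjP.1
  · have hstay : R' b = R b := by
      refine hout b fun hbS => ?_
      exact (peak_isPeak (R b) hb _ _ (Or.inr ⟨hd, hbc⟩)).2 (hin b hbS)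
    have hb' : (R' b).1 ≠ R0 := by rw [hstay]; exact hb
    obtain ⟨-, -, hlt', -⟩ := key R' ⟨b, hb'⟩
    have hdx : x ≤ f R' := by
      by_contra hx
      have h1 := hlt' (not_le.mp hx) b hb'
      rw [hstay] at h1
      exact absurd (hbc.trans h1) (not_le.mpr hd)
    exact (peak_isPeak (R j) hj0 _ _
      (Or.inr ⟨hd, hgt (hdx.trans_lt hd) j hj0⟩)).2 hjP.1
end

section
/- Let n ≥ 2. If a social choice function f : S₀ⁿ → A is efficient and strategy-proof, then f is tops-only. -/
open Classical in
/-- Hybrid profile: agents in `s` use `R'`, the others `R`. -/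
noncomputable def hyb {n : ℕ} (R R' : Fin n → S0) (s : Finset (Fin n)) : Fin n → S0 :=
  fun j => if j ∈ s then R' j else R j

lemma hyb_insert {n : ℕ} (R R' : Fin n → S0) (s : Finset (Fin n)) (k : Fin n) :
    hyb R R' (insert k s) = Function.update (hyb R R' s) k (R' k) := by
  classical
  funext j
  by_cases h : j = k
  · subst h; simp [hyb]
  · simp [hyb, h, Function.update]

/-- Walking from `R` to `R'` one agent at a time, preserving a property of the outcome. -/
lemma walk {n : ℕ} (f : (Fin n → S0) → A) (hSP : StrategyProof f) (R R' : Fin n → S0)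
    (Q : A → Prop) (h0 : Q (f R))
    (hstep : ∀ s : Finset (Fin n), ∀ k, k ∉ s → R k ≠ R' k → Q (f (hyb R R' s)) →
      (R k).1.rel (f (hyb R R' s)) (f (hyb R R' (insert k s))) →
      (R' k).1.rel (f (hyb R R' (insert k s))) (f (hyb R R' s)) →
      Q (f (hyb R R' (insert k s)))) : Q (f R') := by
  classical
  have key : ∀ s : Finset (Fin n), Q (f (hyb R R' s)) := by
    intro s
    induction s using Finset.induction_on with
    | empty =>
      have : hyb R R' ∅ = R := by funext j; simp [hyb]
      rw [this]; exact h0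
    | insert k s hk ih =>
      have hk0 : hyb R R' s k = R k := by simp [hyb, hk]
      have hk1 : hyb R R' (insert k s) k = R' k := by simp [hyb]
      by_cases he : R k = R' k
      · have : hyb R R' (insert k s) = hyb R R' s := by
          rw [hyb_insert, ← he, ← hk0, Function.update_eq_self]
        rw [this]; exact ih
      · refine hstep s k hk he ih ?_ ?_
        · have := hSP (hyb R R' s) k (R' k)
          rw [hk0, ← hyb_insert] at this
          exact this
        · have := hSP (hyb R R' (insert k s)) k (R k)
          rw [hk1] at this
          have e : Function.update (hyb R R' (insert k s)) k (R k) = hyb R R' s := by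
            rw [hyb_insert, Function.update_idem, ← hk0, Function.update_eq_self]
          rw [e] at this
          exact this
  have e : hyb R R' Finset.univ = R' := by funext j; simp [hyb]
  have := key Finset.univ
  rwa [e] at this

/-- Preference from a utility function. -/
def ofU (u : A → ℝ) : Pref :=
  ⟨fun a b => u b ≤ u a, fun a b => le_total _ _, fun _ _ _ h1 h2 => le_trans h2 h1⟩

open Classical in
/-- Peak `p`, everything left of `p` is worse than everything right of it. -/
noncomputable def prefU (p : A) : Pref :=
  ofU (fun z => if p ≤ z then -(z : ℝ) else (z : ℝ) - 10)

open Classical in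
/-- Peak `p`, everything right of `p` is worse than everything left of it. -/
noncomputable def prefD (p : A) : Pref :=
  ofU (fun z => if z ≤ p then (z : ℝ) else -(z : ℝ) - 10)

lemma prefU_peak (p : A) : (prefU p).IsPeak p := by
  intro a b h
  have ha := a.2; have hb := b.2
  simp only [Set.mem_Icc] at ha hb
  simp only [Pref.P, prefU, ofU, ← Subtype.coe_le_coe, ← Subtype.coe_lt_coe] at *
  rcases h with ⟨h1, h2⟩ | ⟨h1, h2⟩ <;> split_ifs <;> constructor <;> linarith

lemma prefD_peak (p : A) : (prefD p).IsPeak p := by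
  intro a b h
  have ha := a.2; have hb := b.2
  simp only [Set.mem_Icc] at ha hb
  simp only [Pref.P, prefD, ofU, ← Subtype.coe_le_coe, ← Subtype.coe_lt_coe] at *
  rcases h with ⟨h1, h2⟩ | ⟨h1, h2⟩ <;> split_ifs <;> constructor <;> linarith

lemma prefU_rel {p a b : A} (h : (prefU p).rel a b) (hb : p ≤ b) : p ≤ a ∧ a ≤ b := by
  have ha := a.2; have hb' := b.2
  simp only [Set.mem_Icc] at ha hb'
  simp only [prefU, ofU, ← Subtype.coe_le_coe] at *
  rw [if_pos hb] at h
  split_ifs at h with h1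
  · exact ⟨h1, by linarith⟩
  · linarith

lemma prefD_rel {p a b : A} (h : (prefD p).rel a b) (hb : b ≤ p) : a ≤ p := by
  have ha := a.2; have hb' := b.2
  simp only [Set.mem_Icc] at ha hb'
  simp only [prefD, ofU, ← Subtype.coe_le_coe] at *
  rw [if_pos hb] at h
  split_ifs at h with h1
  · exact h1
  · linarith

lemma peak_rel_right {R : Pref} {p a b : A} (hp : R.IsPeak p) (hb : p ≤ b)
    (h : R.rel a b) : a ≤ b := by
  by_contra hc
  exact (hp b a (Or.inl ⟨hb, not_le.1 hc⟩)).2 h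

lemma peak_rel_left {R : Pref} {p a b : A} (hp : R.IsPeak p) (hb : b ≤ p)
    (h : R.rel a b) : b ≤ a := by
  by_contra hc
  exact (hp b a (Or.inr ⟨not_le.1 hc, hb⟩)).2 h

lemma R0_not_peak (p : A) : ¬ R0.IsPeak p := by
  intro h
  rcases lt_or_ge p oneA with h1 | h1
  · exact (h p oneA (Or.inl ⟨le_refl _, h1⟩)).2 trivial
  · have : zeroA < p := lt_of_lt_of_le (by simp [zeroA, oneA, ← Subtype.coe_lt_coe]) h1
    exact (h p zeroA (Or.inr ⟨this, le_refl _⟩)).2 trivial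

lemma peak_spec (r : S0) (h : r.1 ≠ R0) : r.1.IsPeak (peak r.1) := by
  have hs : SinglePeaked r.1 := r.2.resolve_right h
  unfold peak
  rw [dif_pos hs]
  exact hs.choose_spec

lemma eff_ge {n : ℕ} {f : (Fin n → S0) → A} (hEff : Efficient f) {R : Fin n → S0} {p : A}
    {i : Fin n} (hi : (R i).1.IsPeak p)
    (hall : ∀ j, (R j).1 = R0 ∨ ∃ q, p ≤ q ∧ (R j).1.IsPeak q) : p ≤ f R := by
  by_contra hc
  have hc := not_le.1 hc
  refine hEff R ⟨p, hc.ne', fun j => ?_, i, hi _ _ (Or.inr ⟨hc, le_refl _⟩)⟩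
  rcases hall j with h | ⟨q, hq, h⟩
  · rw [h]; trivial
  · exact (h _ _ (Or.inr ⟨hc, hq⟩)).1

/-- Main step: agent `i` cannot move the outcome across his peak. -/
lemma no_cross {n : ℕ} {f : (Fin n → S0) → A} (hEff : Efficient f) (hSP : StrategyProof f)
    {R R' : Fin n → S0} {p : A} {i : Fin n} (hi : (R i).1.IsPeak p) (hi' : (R' i).1.IsPeak p)
    (hne : ∀ j, j ≠ i → R' j = R j) (hx : f R ≤ p) (hy : p < f R') : False := by
  classical
  let low : Fin n → Prop := fun j => j ≠ i ∧ ∃ q, q < p ∧ (R j).1.IsPeak q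
  let T : Fin n → S0 := fun j =>
    if low j then ⟨prefD p, Or.inl ⟨p, prefD_peak p⟩⟩ else R j
  let T' : Fin n → S0 := fun j =>
    if low j then ⟨prefU p, Or.inl ⟨p, prefU_peak p⟩⟩ else R' j
  have hli : ¬ low i := fun h => h.1 rfl
  have tp : ∀ j, low j → T j = ⟨prefD p, Or.inl ⟨p, prefD_peak p⟩⟩ := fun j h => if_pos h
  have tn : ∀ j, ¬ low j → T j = R j := fun j h => if_neg h
  have tp' : ∀ j, low j → T' j = ⟨prefU p, Or.inl ⟨p, prefU_peak p⟩⟩ := fun j h => if_pos h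
  have tn' : ∀ j, ¬ low j → T' j = R' j := fun j h => if_neg h
  have hT : f T ≤ p := by
    refine walk f hSP R T (fun a => a ≤ p) hx ?_
    intro s k _ hk hQ _ h2
    by_cases hl : low k
    · rw [tp k hl] at h2
      exact prefD_rel h2 hQ
    · exact hk (tn k hl).symm |>.elim
  have hT' : f T' = f R' := by
    refine walk f hSP R' T' (fun a => a = f R') rfl ?_
    intro s k _ hk hQ h1 h2
    by_cases hl : low k
    · rw [tp' k hl] at h2
      obtain ⟨ha, hb⟩ := prefU_rel h2 (by rw [hQ]; exact hy.le)
      obtain ⟨hki, q, hq, hpk⟩ := hl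
      rw [hne k hki] at h1
      have := peak_rel_right hpk (hq.le.trans ha) h1
      rw [← hQ]
      exact le_antisymm hb this
    · exact absurd (tn' k hl).symm hk
  have hTi : (T i).1.IsPeak p := by rw [tn i hli]; exact hi
  have hTi' : (T' i).1.IsPeak p := by rw [tn' i hli]; exact hi'
  have hcase : ∀ j, ((T j).1.IsPeak p ∧ (T' j).1.IsPeak p) ∨
      (T j = T' j ∧ ((T j).1 = R0 ∨ ∃ q, p ≤ q ∧ (T j).1.IsPeak q)) := by
    intro j
    by_cases hji : j = i
    · subst hji; exact Or.inl ⟨hTi, hTi'⟩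
    by_cases hl : low j
    · left
      rw [tp j hl, tp' j hl]
      exact ⟨prefD_peak p, prefU_peak p⟩
    · right
      rw [tn j hl, tn' j hl]
      refine ⟨(hne j hji).symm, ?_⟩
      by_cases h0 : (R j).1 = R0
      · exact Or.inl h0
      · right
        refine ⟨peak (R j).1, ?_, peak_spec _ h0⟩
        by_contra hc
        exact hl ⟨hji, _, not_le.1 hc, peak_spec _ h0⟩
  have hge : ∀ s, p ≤ f (hyb T T' s) := by
    intro s
    refine eff_ge hEff (i := i) ?_ ?_
    · unfold hyb; split_ifs
      · exact hTi'
      · exact hTi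
    · intro j
      rcases hcase j with ⟨h1, h2⟩ | ⟨h1, h2⟩
      · right
        refine ⟨p, le_refl _, ?_⟩
        unfold hyb; split_ifs
        · exact h2
        · exact h1
      · have : hyb T T' s j = T j := by unfold hyb; rw [← h1]; simp
        rw [this]; exact h2
  have hfin : f T' ≤ p := by
    refine walk f hSP T T' (fun a => a ≤ p) hT ?_
    intro s k _ hk hQ h1 h2
    rcases hcase k with ⟨_, h⟩ | ⟨h, _⟩
    · exact (peak_rel_right h (hge s) h2).trans hQ
    · exact absurd h hk
  rw [hT'] at hfin
  exact absurd hy (not_lt.2 hfin)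

lemma one_step {n : ℕ} {f : (Fin n → S0) → A} (hEff : Efficient f) (hSP : StrategyProof f)
    {R R' : Fin n → S0} {p : A} {i : Fin n} (hi : (R i).1.IsPeak p) (hi' : (R' i).1.IsPeak p)
    (hne : ∀ j, j ≠ i → R' j = R j) (h1 : (R i).1.rel (f R) (f R'))
    (h2 : (R' i).1.rel (f R') (f R)) : f R' = f R := by
  rcases le_or_gt (f R) p with hx | hx
  · rcases le_or_gt (f R') p with hy | hy
    · exact le_antisymm (peak_rel_left hi hy h1) (peak_rel_left hi' hx h2)
    · exact (no_cross hEff hSP hi hi' hne hx hy).elim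
  · rcases le_or_gt (f R') p with hy | hy
    · exact (no_cross hEff hSP hi' hi (fun j hj => (hne j hj).symm) hy hx).elim
    · exact le_antisymm (peak_rel_right hi' hx.le h2) (peak_rel_right hi hy.le h1)

/-- For n ≥ 2, every efficient and strategy-proof SCF is
tops-only. -/
theorem stmt_3 (n : ℕ) (hn : 2 ≤ n) (f : (Fin n → S0) → A)
    (hEff : Efficient f) (hSP : StrategyProof f) : TopsOnly f := by
  classical
  intro R R' h0 hp
  refine (walk f hSP R R' (fun a => a = f R) rfl ?_).symm
  intro s k hks hk hQ h1 h2
  have e0 : hyb R R' s k = R k := by simp [hyb, hks]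
  have e1 : hyb R R' (insert k s) k = R' k := by simp [hyb]
  by_cases hz : (R k).1 = R0
  · exact absurd (Subtype.ext (hz.trans ((h0 k).1 hz).symm)) hk
  · have hz' : (R' k).1 ≠ R0 := fun h => hz ((h0 k).2 h)
    have hpk := peak_spec _ hz
    have hpk' := peak_spec _ hz'
    rw [← hp k hz] at hpk'
    rw [← hQ]
    refine one_step hEff hSP (i := k) (p := peak (R k).1) ?_ ?_ ?_ ?_ ?_
    · rw [e0]; exact hpk
    · rw [e1]; exact hpk'
    · intro j hj
      rw [hyb_insert, Function.update_of_ne hj]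
    · rw [e0]; exact h1
    · rw [e1]; exact h2
end

section
/- Let n ≥ 2. If a social choice function f : S₀ⁿ → A is efficient and strategy-proof, then f is weakly group strategy-proof. -/
/-- The preference represented by a utility function. -/
def utilPref (u : ℝ → ℝ) : Pref :=
  ⟨fun x y => u y ≤ u x, fun x y => le_total _ _, fun _ _ _ h1 h2 => le_trans h2 h1⟩

lemma utilPref_peak (u : ℝ → ℝ) (p : A)
    (h1 : ∀ x y : ℝ, 0 ≤ x → y ≤ 1 → (p : ℝ) ≤ x → x < y → u y < u x)
    (h2 : ∀ x y : ℝ, x ≤ 1 → 0 ≤ y → x ≤ (p : ℝ) → y < x → u y < u x) :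
    (utilPref u).IsPeak p := by
  rintro ⟨x, hx0, hx1⟩ ⟨y, hy0, hy1⟩ (⟨h, h'⟩ | ⟨h', h⟩)
  · have := h1 x y hx0 hy1 h h'
    exact ⟨this.le, not_le.2 this⟩
  · have := h2 x y hx1 hy0 h h'
    exact ⟨this.le, not_le.2 this⟩

lemma exists_U (a p c : A) (hap : a < p) (hpc : p < c) :
    ∃ U : S0, U.1.IsPeak p ∧ (∀ x, U.1.rel x c → a < x ∧ x ≤ c) ∧
      (∀ x, U.1.rel c x → a < x → x < c → False) := by
  obtain ⟨a, ha0, ha1⟩ := a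
  obtain ⟨p, hp0, hp1⟩ := p
  obtain ⟨c, hc0, hc1⟩ := c
  have hap' : a < p := hap
  have hpc' : p < c := hpc
  let u : ℝ → ℝ := fun x => if x ≤ a then -4 + x else if c < x then -x - 3 else
    if x = c then -2 else if x ≤ p then x - p else p - x
  have hpk : (utilPref u).IsPeak ⟨p, hp0, hp1⟩ := by
    apply utilPref_peak
    · intro x y _ _ h1 h2
      dsimp only [u] at *
      split_ifs <;> linarith
    · intro x y _ _ h1 h2
      dsimp only [u] at *
      split_ifs <;> linarith
  refine ⟨⟨utilPref u, Or.inl ⟨_, hpk⟩⟩, hpk, ?_, ?_⟩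
  · rintro ⟨x, hx0, hx1⟩ h
    have h : u c ≤ u x := h
    change a < x ∧ x ≤ c
    constructor <;> by_contra hh <;> dsimp only [u] at h <;> split_ifs at h <;> first | linarith | grind
  · rintro ⟨x, hx0, hx1⟩ h h1 h2
    have h : u x ≤ u c := h
    have h1 : a < x := h1
    have h2 : x < c := h2
    dsimp only [u] at h
    split_ifs at h <;> first | linarith | grind

set_option maxHeartbeats 2000000 in
lemma exists_V (a p c : A) (hap : a < p) (hpc : p < c) :
    ∃ V : S0, V.1.IsPeak p ∧ (∀ x, V.1.rel x c → a ≤ x ∧ x ≤ c) ∧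
      (∀ x, V.1.rel x a → a ≤ x ∧ x < c) := by
  obtain ⟨a, ha0, ha1⟩ := a
  obtain ⟨p, hp0, hp1⟩ := p
  obtain ⟨c, hc0, hc1⟩ := c
  have hap' : a < p := hap
  have hpc' : p < c := hpc
  let u : ℝ → ℝ := fun x => if x < a then -5 + x else if c < x then -x - 4 else
    if x = c then -3 else if x = a then -2 else if x ≤ p then x - p else p - x
  have hpk : (utilPref u).IsPeak ⟨p, hp0, hp1⟩ := by
    apply utilPref_peak
    · intro x y _ _ h1 h2
      dsimp only [u] at *
      split_ifs <;> linarith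
    · intro x y _ _ h1 h2
      dsimp only [u] at *
      split_ifs <;> first | linarith | grind
  refine ⟨⟨utilPref u, Or.inl ⟨_, hpk⟩⟩, hpk, ?_, ?_⟩
  · rintro ⟨x, hx0, hx1⟩ h
    have h : u c ≤ u x := h
    change a ≤ x ∧ x ≤ c
    constructor <;> by_contra hh <;> dsimp only [u] at h <;> split_ifs at h <;> first | linarith | grind
  · rintro ⟨x, hx0, hx1⟩ h
    have h : u a ≤ u x := h
    change a ≤ x ∧ x < c
    constructor <;> by_contra hh <;> dsimp only [u] at h <;> split_ifs at h <;> first | linarith | grind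

lemma exists_W (p : A) :
    ∃ W : S0, ∀ x y, p ≤ y → W.1.rel x y → p ≤ x ∧ x ≤ y := by
  obtain ⟨p, hp0, hp1⟩ := p
  let u : ℝ → ℝ := fun x => if x < p then -3 + x else p - x
  have hpk : (utilPref u).IsPeak ⟨p, hp0, hp1⟩ := by
    apply utilPref_peak
    · intro x y _ _ h1 h2
      dsimp only [u] at *
      split_ifs <;> linarith
    · intro x y _ _ h1 h2
      dsimp only [u] at *
      split_ifs <;> linarith
  refine ⟨⟨utilPref u, Or.inl ⟨_, hpk⟩⟩, ?_⟩
  rintro ⟨x, hx0, hx1⟩ ⟨y, hy0, hy1⟩ hy h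
  have h : u y ≤ u x := h
  have hy : p ≤ y := hy
  change p ≤ x ∧ x ≤ y
  constructor <;> by_contra hh <;> dsimp only [u] at h <;> split_ifs at h <;> linarith

lemma peak_not_le {R : Pref} {p q a : A} (hp : R.IsPeak p) (hq : R.IsPeak q)
    (hap : a < p) (hqa : q ≤ a) : False :=
  (hq a p (Or.inl ⟨hqa, hap⟩)).2 (hp p a (Or.inr ⟨hap, le_rfl⟩)).1

/-- If everyone non-indifferent has a peak above `a`, then `a` is not efficient. -/
lemma eff_exists {n : ℕ} (T : Fin n → S0) (a p : A) (i : Fin n) (hi : (T i).1.IsPeak p)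
    (hap : a < p) (h : EfficientAt T a) : ∃ j, ∃ q ≤ a, (T j).1.IsPeak q := by
  by_contra hno
  push Not at hno
  have key : ∀ k, ∃ q, a < q ∧ ∀ b, a < b → b ≤ q → (T k).1.rel b a := by
    intro k
    rcases (T k).2 with ⟨q, hq⟩ | h0
    · refine ⟨q, ?_, fun b hb hbq => (hq b a (Or.inr ⟨hb, hbq⟩)).1⟩
      by_contra hc
      exact hno k q (not_lt.1 hc) hq
    · refine ⟨p, hap, fun b _ _ => ?_⟩
      rw [h0]; trivial
  choose q hq1 hq2 using key
  obtain ⟨m, -, hm⟩ := Finset.exists_min_image Finset.univ q ⟨i, Finset.mem_univ i⟩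
  have hb : a < min (q m) p := lt_min (hq1 m) hap
  refine h ⟨min (q m) p, hb.ne', fun k => hq2 k _ hb ((min_le_left _ _).trans (hm k (Finset.mem_univ k))), i, ?_⟩
  exact hi _ _ (Or.inr ⟨hb, min_le_right _ _⟩)

lemma no_pivot {n : ℕ} (f : (Fin n → S0) → A) (hEff : Efficient f) (hSP : StrategyProof f)
    (a p c : A) (hap : a < p) (hpc : p < c) (U V : S0) (hUp : U.1.IsPeak p) (hVp : V.1.IsPeak p)
    (hU1 : ∀ x, U.1.rel x c → a < x ∧ x ≤ c)
    (hU2 : ∀ x, U.1.rel c x → a < x → x < c → False)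
    (hV1 : ∀ x, V.1.rel x c → a ≤ x ∧ x ≤ c)
    (hV2 : ∀ x, V.1.rel x a → a ≤ x ∧ x < c) :
    ∀ (m : ℕ) (T : Fin n → S0) (i : Fin n),
      Set.ncard {k | ∃ q ≤ a, (T k).1.IsPeak q} ≤ m → T i = V → f T = a →
      f (Function.update T i U) = c → False := by
  -- the count drops when an agent with a low peak moves to a peak at `p`
  have drop : ∀ (m : ℕ) (T : Fin n → S0) (j : Fin n) (X : S0), X.1.IsPeak p →
      (∃ q ≤ a, (T j).1.IsPeak q) →
      Set.ncard {k | ∃ q ≤ a, (T k).1.IsPeak q} ≤ m + 1 →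
      Set.ncard {k | ∃ q ≤ a, (Function.update T j X k).1.IsPeak q} ≤ m := by
    intro m T j X hX hj hm
    refine Nat.lt_succ_iff.1 (lt_of_lt_of_le (Set.ncard_lt_ncard ?_ (Set.toFinite _)) hm)
    refine ⟨?_, fun hsub => ?_⟩
    · rintro k ⟨q, hqa, hq⟩
      by_cases hk : k = j
      · subst hk; exact hj
      · rw [Function.update_of_ne hk] at hq
        exact ⟨q, hqa, hq⟩
    · obtain ⟨q, hqa, hq⟩ := hsub hj
      rw [Function.update_self] at hq
      exact peak_not_le hX hq hap hqa
  have hac : a < c := hap.trans hpc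
  intro m
  induction m with
  | zero =>
    intro T i hm hTi hfa hfc
    obtain ⟨j, hj⟩ := eff_exists T a p i (hTi ▸ hVp) hap (hfa ▸ hEff T)
    have h0 : {k | ∃ q ≤ a, (T k).1.IsPeak q} = ∅ :=
      (Set.ncard_eq_zero (Set.toFinite _)).1 (Nat.le_zero.1 hm)
    have : j ∈ {k | ∃ q ≤ a, (T k).1.IsPeak q} := hj
    rw [h0] at this
    exact this
  | succ m ih =>
    intro T i hm hTi hfa hfc
    obtain ⟨j, hj⟩ := eff_exists T a p i (hTi ▸ hVp) hap (hfa ▸ hEff T)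
    have hji : j ≠ i := by
      rintro rfl
      obtain ⟨q, hqa, hq⟩ := hj
      exact peak_not_le (hTi ▸ hVp) hq hap hqa
    -- f (U_i, U_j) = c
    have hd2 : f (Function.update (Function.update T i U) j U) = c := by
      have h1 := hSP (Function.update T i U) j U
      have h2 := hSP (Function.update (Function.update T i U) j U) j (T j)
      have e : Function.update (Function.update (Function.update T i U) j U) j (T j)
          = Function.update T i U := by
        rw [Function.update_idem]
        have : T j = Function.update T i U j := by rw [Function.update_of_ne hji]
        rw [this, Function.update_eq_self]
      rw [e, hfc, Function.update_self] at h2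
      rw [hfc, Function.update_of_ne hji] at h1
      obtain ⟨h3, h4⟩ := hU1 _ h2
      by_contra hne
      obtain ⟨q, hqa, hq⟩ := hj
      exact (hq _ _ (Or.inl ⟨hqa.trans h3.le, lt_of_le_of_ne h4 hne⟩)).2 h1
    rw [Function.update_comm hji.symm] at hd2
    -- f (V_i, U_j) is a or c
    have hd1 : f (Function.update T j U) = a ∨ f (Function.update T j U) = c := by
      have h1 := hSP (Function.update T j U) i U
      rw [hd2, Function.update_of_ne hji.symm, hTi] at h1
      have h2 := hSP (Function.update (Function.update T j U) i U) i V
      have e : Function.update (Function.update (Function.update T j U) i U) i V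
          = Function.update T j U := by
        rw [Function.update_idem]
        have : V = Function.update T j U i := by rw [Function.update_of_ne hji.symm, hTi]
        rw [this, Function.update_eq_self]
      rw [e, hd2, Function.update_self] at h2
      obtain ⟨h3, h4⟩ := hV1 _ h1
      rcases h3.eq_or_lt with h | h
      · exact Or.inl h.symm
      · rcases h4.eq_or_lt with h' | h'
        · exact Or.inr h'
        · exact (hU2 _ h2 h h').elim
    rcases hd1 with hd | hd
    · refine ih (Function.update T j U) i (drop m T j U hUp hj hm) ?_ hd hd2
      rw [Function.update_of_ne hji.symm, hTi]
    · refine ih (Function.update T j V) j (drop m T j V hVp hj hm) ?_ ?_ ?_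
      · rw [Function.update_self]
      · have h1 := hSP (Function.update T j V) j U
        have h2 := hSP (Function.update T j U) j V
        have h3 := hSP (Function.update T j V) j (T j)
        rw [Function.update_idem, Function.update_self] at h1 h2 h3
        rw [Function.update_eq_self, hfa] at h3
        rw [hd] at h1 h2
        obtain ⟨h4, h5⟩ := hV2 _ h3
        by_contra hne
        exact hU2 _ h2 (lt_of_le_of_ne h4 (Ne.symm hne)) h5
      · rw [Function.update_idem, hd]

/-- Uncompromisingness: an agent with peak above the outcome cannot raise it. -/
lemma cannot_raise {n : ℕ} (f : (Fin n → S0) → A) (hEff : Efficient f) (hSP : StrategyProof f)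
    (R : Fin n → S0) (i : Fin n) (p : A) (hp : (R i).1.IsPeak p) (hlt : f R < p) (X : S0) :
    f (Function.update R i X) ≤ f R := by
  by_contra hX
  rw [not_le] at hX
  -- nothing in the option set lies in (f R, p]
  have gap : ∀ Y, f R < f (Function.update R i Y) → p < f (Function.update R i Y) := by
    intro Y hY
    by_contra hc
    exact (hp _ _ (Or.inr ⟨hY, not_lt.1 hc⟩)).2 (hSP R i Y)
  have opt : ∀ Y Z : S0, Y.1.rel (f (Function.update R i Y)) (f (Function.update R i Z)) := by
    intro Y Z
    have := hSP (Function.update R i Y) i Z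
    rwa [Function.update_idem, Function.update_self] at this
  have optR : ∀ Y : S0, Y.1.rel (f (Function.update R i Y)) (f R) := by
    intro Y
    have := opt Y (R i)
    rwa [Function.update_eq_self] at this
  obtain ⟨W, hW⟩ := exists_W p
  have hpc : p < f (Function.update R i W) :=
    gap W (hlt.trans_le (hW _ _ (gap X hX).le (opt W X)).1)
  have hmin : ∀ Y, f R < f (Function.update R i Y) →
      f (Function.update R i W) ≤ f (Function.update R i Y) :=
    fun Y hY => (hW _ _ (gap Y hY).le (opt W Y)).2
  obtain ⟨U, hUp, hU1, hU2⟩ := exists_U (f R) p _ hlt hpc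
  obtain ⟨V, hVp, hV1, hV2⟩ := exists_V (f R) p _ hlt hpc
  refine no_pivot f hEff hSP (f R) p _ hlt hpc U V hUp hVp hU1 hU2 hV1 hV2 _
    (Function.update R i V) i le_rfl (Function.update_self _ _ _) ?_ ?_
  · obtain ⟨h1, h2⟩ := hV2 _ (optR V)
    by_contra hne
    exact absurd (hmin V (lt_of_le_of_ne h1 (Ne.symm hne))) (not_le.2 h2)
  · rw [Function.update_idem]
    obtain ⟨h1, h2⟩ := hU1 _ (opt U W)
    exact le_antisymm h2 (hmin U h1)

lemma group_raise {n : ℕ} (f : (Fin n → S0) → A) (hEff : Efficient f) (hSP : StrategyProof f)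
    (R' : Fin n → S0) (S : Finset (Fin n)) :
    ∀ R : Fin n → S0, (∀ i ∉ S, R' i = R i) →
      (∀ i ∈ S, ∃ p, (R i).1.IsPeak p ∧ f R < p) → f R' ≤ f R := by
  induction S using Finset.induction_on with
  | empty =>
    intro R h _
    have : R' = R := funext fun i => h i (Finset.notMem_empty i)
    rw [this]
  | insert j S hj ih =>
    intro R h1 h2
    obtain ⟨p, hp, hlt⟩ := h2 j (Finset.mem_insert_self _ _)
    have h3 := cannot_raise f hEff hSP R j p hp hlt (R' j)
    refine (ih (Function.update R j (R' j)) ?_ ?_).trans h3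
    · intro i hi
      by_cases hij : i = j
      · subst hij; rw [Function.update_self]
      · rw [Function.update_of_ne hij]
        exact h1 i (by simp [hij, hi])
    · intro i hi
      have hij : i ≠ j := fun h => hj (h ▸ hi)
      obtain ⟨q, hq, hq'⟩ := h2 i (Finset.mem_insert_of_mem hi)
      rw [Function.update_of_ne hij]
      exact ⟨q, hq, h3.trans_lt hq'⟩

lemma no_up {n : ℕ} (f : (Fin n → S0) → A) (hEff : Efficient f) (hSP : StrategyProof f)
    (R R' : Fin n → S0) (S : Finset (Fin n)) (h : ∀ i ∉ S, R' i = R i)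
    (hP : ∀ i ∈ S, (R i).1.P (f R') (f R)) : f R' ≤ f R := by
  by_contra hc
  rw [not_le] at hc
  refine absurd (group_raise f hEff hSP R' S R h fun i hi => ?_) (not_le.2 hc)
  rcases (R i).2 with ⟨p, hp⟩ | h0
  · refine ⟨p, hp, ?_⟩
    by_contra hle
    exact (hP i hi).2 (hp _ _ (Or.inl ⟨not_lt.1 hle, hc⟩)).1
  · have := (hP i hi).2
    rw [h0] at this
    exact (this trivial).elim

/-- Reflection of the preferences along the middle of the interval. -/
def reflP (R : Pref) : Pref :=
  ⟨fun x y => R.rel (unitInterval.symm x) (unitInterval.symm y), fun _ _ => R.total _ _,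
    fun _ _ _ h1 h2 => R.trans _ _ _ h1 h2⟩

lemma reflP_reflP (R : Pref) : reflP (reflP R) = R := by
  cases R
  simp [reflP]

lemma symm_lt' {x y : A} (h : x < y) : unitInterval.symm y < unitInterval.symm x :=
  unitInterval.symm_lt_symm.2 h

lemma symm_le' {x y : A} (h : x ≤ y) : unitInterval.symm y ≤ unitInterval.symm x :=
  unitInterval.symm_le_symm.2 h

def reflS (R : S0) : S0 := ⟨reflP R.1, by
  rcases R.2 with ⟨p, hp⟩ | h0
  · left
    refine ⟨unitInterval.symm p, fun a b h => hp _ _ ?_⟩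
    rcases h with ⟨h1, h2⟩ | ⟨h1, h2⟩
    · right
      refine ⟨symm_lt' h2, ?_⟩
      simpa using symm_le' h1
    · left
      refine ⟨?_, symm_lt' h1⟩
      simpa using symm_le' h2
  · right
    rw [h0]; rfl⟩

lemma reflS_reflS (R : S0) : reflS (reflS R) = R := Subtype.ext (reflP_reflP R.1)

/-- For n ≥ 2, every efficient and strategy-proof SCF is weakly
group strategy-proof. -/
theorem stmt_4 (n : ℕ) (hn : 2 ≤ n) (f : (Fin n → S0) → A)
    (hEff : Efficient f) (hSP : StrategyProof f) : WeakGroupSP f := by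
  rintro S ⟨j, hj⟩ ⟨R, R', h, hP⟩
  have h1 := no_up f hEff hSP R R' S h hP
  let g : (Fin n → S0) → A := fun T => unitInterval.symm (f fun k => reflS (T k))
  have hgE : Efficient g := by
    rintro T ⟨b, hb, hall, k, hk⟩
    refine hEff (fun k => reflS (T k)) ⟨unitInterval.symm b, ?_, fun i => ?_, k, ?_, ?_⟩
    · intro e
      apply hb
      simp only [g]
      rw [← e, unitInterval.symm_symm]
    · have := hall i
      simpa [g, reflS, reflP] using this
    · have := hk.1
      simpa [g, reflS, reflP] using this
    · have := hk.2
      simpa [g, reflS, reflP] using this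
  have hgS : StrategyProof g := by
    intro T i X
    have := hSP (fun k => reflS (T k)) i (reflS X)
    have e : (fun k => reflS (Function.update T i X k))
        = Function.update (fun k => reflS (T k)) i (reflS X) := by
      funext k
      by_cases hk : k = i
      · subst hk; simp
      · simp [hk]
    simp only [g]
    rw [e]
    exact this
  have hgR : ∀ T : Fin n → S0, g (fun k => reflS (T k)) = unitInterval.symm (f T) := by
    intro T
    simp only [g, reflS_reflS]
  have h2 := no_up g hgE hgS (fun k => reflS (R k)) (fun k => reflS (R' k)) S
    (fun i hi => by simp only [h i hi]) (fun i hi => by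
      rw [hgR, hgR]
      have := hP i hi
      simpa [Pref.P, reflS, reflP] using this)
  rw [hgR, hgR] at h2
  have h3 : f R ≤ f R' := unitInterval.symm_le_symm.1 h2
  have e : f R' = f R := le_antisymm h1 h3
  have := hP j hj
  rw [e] at this
  exact this.2 this.1
end

section
/- Let n ≥ 2 and let h : Sⁿ → A be a social choice function on the domain of single-peaked preferences. If h is efficient and strategy-proof, then h is tops-only: for any two profiles R, R' ∈ Sⁿ with τ(R_i) = τ(R'_i) for every agent i, h(R) = h(R'). -/
/-- The single-peaked domain S. -/
def Ssp : Type := {R : Pref // SinglePeaked R}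

/-- Peak `p`, everything weakly left of `p` is better than everything to the right. -/
def leftPref (p : A) : Pref where
  rel x y := (x ≤ p ∧ (y ≤ x ∨ p < y)) ∨ (p < x ∧ x ≤ y)
  total a b := by
    rcases le_total a b with h1 | h1 <;> rcases le_or_gt a p with h2 | h2 <;>
      rcases le_or_gt b p with h3 | h3 <;> grind
  trans a b c := by grind

/-- Peak `p`, everything weakly right of `p` is better than everything to the left. -/
def rightPref (p : A) : Pref where
  rel x y := (p ≤ x ∧ (x ≤ y ∨ y < p)) ∨ (x < p ∧ y ≤ x)
  total a b := by
    rcases le_total a b with h1 | h1 <;> rcases le_or_gt p a with h2 | h2 <;>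
      rcases le_or_gt p b with h3 | h3 <;> grind
  trans a b c := by grind

lemma leftPref_peak (p : A) : (leftPref p).IsPeak p := by
  intro a b hab
  simp only [Pref.P, leftPref]
  grind

lemma rightPref_peak (p : A) : (rightPref p).IsPeak p := by
  intro a b hab
  simp only [Pref.P, rightPref]
  grind

def lS (p : A) : Ssp := ⟨leftPref p, p, leftPref_peak p⟩
def rS (p : A) : Ssp := ⟨rightPref p, p, rightPref_peak p⟩

lemma lS_rel (p x y : A) :
    (lS p).1.rel x y ↔ ((x ≤ p ∧ (y ≤ x ∨ p < y)) ∨ (p < x ∧ x ≤ y)) := Iff.rfl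
lemma rS_rel (p x y : A) :
    (rS p).1.rel x y ↔ ((p ≤ x ∧ (x ≤ y ∨ y < p)) ∨ (x < p ∧ y ≤ x)) := Iff.rfl

lemma sp_not {Q : Pref} (hQ : SinglePeaked Q) {a p b : A} (h1 : a < p) (h2 : p < b)
    (ha : Q.rel a p) (hb : Q.rel b p) : False := by
  obtain ⟨c, hc⟩ := hQ
  rcases le_total c p with h | h
  · exact (hc p b (Or.inl ⟨h, h2⟩)).2 hb
  · exact (hc p a (Or.inr ⟨h1, h⟩)).2 ha

lemma peak_isPeak_s5 (R : Ssp) : R.1.IsPeak (peak R.1) := by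
  have h := R.2
  unfold peak
  rw [dif_pos h]
  exact h.choose_spec

lemma unanim {n : ℕ} (h : (Fin n → Ssp) → A)
    (hEff : ∀ R : Fin n → Ssp,
      ¬ ∃ b : A, b ≠ h R ∧ (∀ i : Fin n, (R i).1.rel b (h R)) ∧
        (∃ j : Fin n, (R j).1.P b (h R)))
    (R : Fin n → Ssp) (p : A) (i : Fin n) (hp : ∀ k, (R k).1.IsPeak p) : h R = p := by
  by_contra hne
  have key : ∀ k, (R k).1.P p (h R) := by
    intro k
    rcases lt_or_gt_of_ne hne with h1 | h1
    · exact hp k _ _ (Or.inr ⟨h1, le_rfl⟩)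
    · exact hp k _ _ (Or.inl ⟨le_rfl, h1⟩)
  exact hEff R ⟨p, Ne.symm hne, fun k => (key k).1, i, key i⟩

lemma sp2 {n : ℕ} (h : (Fin n → Ssp) → A)
    (hSP : ∀ (R : Fin n → Ssp) (i : Fin n) (Ri' : Ssp),
      (R i).1.rel (h R) (h (Function.update R i Ri')))
    (R : Fin n → Ssp) (i : Fin n) (S T : Ssp) :
    S.1.rel (h (Function.update R i S)) (h (Function.update R i T)) := by
  have := hSP (Function.update R i S) i T
  simpa using this

lemma core {n : ℕ} (h : (Fin n → Ssp) → A)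
    (hEff : ∀ R : Fin n → Ssp,
      ¬ ∃ b : A, b ≠ h R ∧ (∀ i : Fin n, (R i).1.rel b (h R)) ∧
        (∃ j : Fin n, (R j).1.P b (h R)))
    (hSP : ∀ (R : Fin n → Ssp) (i : Fin n) (Ri' : Ssp),
      (R i).1.rel (h R) (h (Function.update R i Ri')))
    (p : A) (m : ℕ) : ∀ (R : Fin n → Ssp) (i : Fin n) (s : Finset (Fin n)),
    s.card ≤ m → (∀ k, k ∉ s → k ≠ i → (R k).1.IsPeak p) →
    h (Function.update R i (lS p)) = h (Function.update R i (rS p)) := by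
  induction m with
  | zero =>
    intro R i s hs hk
    have hs' : s = ∅ := by simpa using hs
    subst hs'
    rw [unanim h hEff _ p i, unanim h hEff _ p i]
    · intro k
      by_cases hki : k = i
      · subst hki; rw [Function.update_self]; exact rightPref_peak p
      · simpa [hki] using hk k (by simp) hki
    · intro k
      by_cases hki : k = i
      · subst hki; rw [Function.update_self]; exact leftPref_peak p
      · simpa [hki] using hk k (by simp) hki
  | succ m ih =>
    intro R i s hs hk
    by_cases hj : ∃ j ∈ s, j ≠ i
    swap
    · refine ih R i ∅ (by simp) ?_
      intro k _ hki
      exact hk k (fun hks => hj ⟨k, hks, hki⟩) hki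
    obtain ⟨j, hjs, hji⟩ := hj
    have hcard : (s.erase j).card ≤ m := by
      rw [Finset.card_erase_of_mem hjs]; omega
    have e1 := ih (Function.update R j (lS p)) i (s.erase j) hcard (by
      intro k hks hki
      by_cases hkj : k = j
      · subst hkj; rw [Function.update_self]; exact leftPref_peak p
      · simpa [hkj] using hk k (by simpa [hkj] using hks) hki)
    have e2 := ih (Function.update R j (rS p)) i (s.erase j) hcard (by
      intro k hks hki
      by_cases hkj : k = j
      · subst hkj; rw [Function.update_self]; exact rightPref_peak p
      · simpa [hkj] using hk k (by simpa [hkj] using hks) hki)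
    have e3 := ih (Function.update R i (lS p)) j (s.erase j) hcard (by
      intro k hks hkj
      by_cases hki : k = i
      · subst hki; rw [Function.update_self]; exact leftPref_peak p
      · simpa [hki] using hk k (by simpa [hkj] using hks) hki)
    rw [Function.update_comm hji, Function.update_comm hji] at e1 e2
    by_contra hne
    have f1 := sp2 h hSP R i (lS p) (rS p)
    have f2 := sp2 h hSP R i (rS p) (lS p)
    have g1 := sp2 h hSP (Function.update R i (lS p)) j (lS p) (R j)
    have g2 := sp2 h hSP (Function.update R i (rS p)) j (rS p) (R j)
    have g3 := sp2 h hSP (Function.update R i (lS p)) j (R j) (lS p)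
    have g4 := sp2 h hSP (Function.update R i (rS p)) j (R j) (rS p)
    have u1 : ∀ T, Function.update (Function.update R i T) j (R j) = Function.update R i T := by
      intro T
      have : R j = Function.update R i T j := by simp [hji]
      rw [this, Function.update_eq_self]
    rw [u1] at g1 g2 g3 g4
    rw [lS_rel] at f1 g1
    rw [rS_rel] at f2 g2
    generalize h (Function.update R i (lS p)) = a at *
    generalize h (Function.update R i (rS p)) = b at *
    generalize h (Function.update (Function.update R i (lS p)) j (lS p)) = x at *
    generalize h (Function.update (Function.update R i (lS p)) j (rS p)) = x' at *
    generalize h (Function.update (Function.update R i (rS p)) j (lS p)) = y at *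
    generalize h (Function.update (Function.update R i (rS p)) j (rS p)) = y' at *
    have hap : a < p := by grind
    have hpb : p < b := by grind
    have hx : x = p := by grind
    have hy : y' = p := by grind
    rw [hx] at g3
    rw [hy] at g4
    exact sp_not (R j).2 hap hpb g3 g4

lemma toLeft {n : ℕ} (h : (Fin n → Ssp) → A)
    (hEff : ∀ R : Fin n → Ssp,
      ¬ ∃ b : A, b ≠ h R ∧ (∀ i : Fin n, (R i).1.rel b (h R)) ∧
        (∃ j : Fin n, (R j).1.P b (h R)))
    (hSP : ∀ (R : Fin n → Ssp) (i : Fin n) (Ri' : Ssp),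
      (R i).1.rel (h R) (h (Function.update R i Ri')))
    (R : Fin n → Ssp) (i : Fin n) (p : A) (Q : Ssp) (hQ : Q.1.IsPeak p) :
    h (Function.update R i Q) = h (Function.update R i (lS p)) := by
  have e := core h hEff hSP p _ R i Finset.univ le_rfl (by simp)
  have f1 := sp2 h hSP R i Q (lS p)
  have f2 := sp2 h hSP R i (lS p) Q
  have f3 := sp2 h hSP R i (rS p) Q
  rw [← e] at f3
  rw [lS_rel] at f2
  rw [rS_rel] at f3
  generalize h (Function.update R i Q) = a at *
  generalize h (Function.update R i (lS p)) = m at *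
  by_contra hne
  have : (p ≤ m ∧ m < a) ∨ (a < m ∧ m ≤ p) := by grind
  exact (hQ m a this).2 f1

/-- On the single-peaked domain, every efficient and
strategy-proof SCF is tops-only. -/
theorem stmt_5 (n : ℕ) (hn : 2 ≤ n) (h : (Fin n → Ssp) → A)
    (hEff : ∀ R : Fin n → Ssp,
      ¬ ∃ b : A, b ≠ h R ∧ (∀ i : Fin n, (R i).1.rel b (h R)) ∧
        (∃ j : Fin n, (R j).1.P b (h R)))
    (hSP : ∀ (R : Fin n → Ssp) (i : Fin n) (Ri' : Ssp),
      (R i).1.rel (h R) (h (Function.update R i Ri')))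
    (R R' : Fin n → Ssp)
    (hpeaks : ∀ i : Fin n, peak (R i).1 = peak (R' i).1) :
    h R = h R' := by
  have key : ∀ s : Finset (Fin n), h (fun k => if k ∈ s then R' k else R k) = h R := by
    intro s
    induction s using Finset.induction_on with
    | empty => simp
    | insert i s his ih =>
      rw [← ih]
      have e1 : (fun k => if k ∈ insert i s then R' k else R k) =
          Function.update (fun k => if k ∈ s then R' k else R k) i (R' i) := by
        funext k
        by_cases hk : k = i
        · subst hk; simp
        · simp [hk]
      have e2 : (fun k => if k ∈ s then R' k else R k) =
          Function.update (fun k => if k ∈ s then R' k else R k) i (R i) := by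
        funext k
        by_cases hk : k = i
        · subst hk; simp [his]
        · simp [hk]
      rw [e1, toLeft h hEff hSP _ i _ (R' i) (peak_isPeak_s5 (R' i)), ← hpeaks i,
        ← toLeft h hEff hSP _ i _ (R i) (peak_isPeak_s5 (R i)), ← e2]
  have := key Finset.univ
  simpa using this.symm
end

section
/- Let n ≥ 3 and let f : S₀ⁿ → A be onto and pairwise strategy-proof. Let R ∈ S₀ⁿ be a profile such that for some agents i, j ∈ N, R_i and R_j are single-peaked with τ(R_i) = 0 and τ(R_j) = 1. Then for every agent k ∈ N \ {i, j} and every preference R'_k ∈ S₀, f(R'_k, R_{-k}) = f(R). -/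
/-- Replacing the indifferent preference of agent `k` cannot strictly benefit another agent. -/
lemma not_P_of_indiff {n : ℕ} (f : (Fin n → S0) → A) (hPSP : PairwiseSP f)
    (Q Q' : Fin n → S0) (k i : Fin n) (hk : (Q k).1 = R0)
    (hQ : ∀ l, l ≠ k → Q' l = Q l) : ¬ (Q i).1.P (f Q') (f Q) := by
  intro h
  refine hPSP {k, i} ⟨k, by simp⟩ Finset.card_le_two ⟨Q, Q', ?_, ?_, i, by simp, h⟩
  · intro l hl
    apply hQ
    rintro rfl
    simp at hl
  · intro l hl
    rcases Finset.mem_insert.1 hl with rfl | hl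
    · rw [hk]; trivial
    · rw [Finset.mem_singleton.1 hl]; exact h.1

/-- With peaks 0 and 1 present, replacing an indifferent preference has no effect. -/
lemma eq_of_indiff {n : ℕ} (f : (Fin n → S0) → A) (hPSP : PairwiseSP f)
    (Q Q' : Fin n → S0) (i j k : Fin n)
    (hi : (Q i).1.IsPeak zeroA) (hj : (Q j).1.IsPeak oneA) (hk : (Q k).1 = R0)
    (hQ : ∀ l, l ≠ k → Q' l = Q l) : f Q' = f Q := by
  rcases lt_trichotomy (f Q') (f Q) with h | h | h
  · exact absurd (hi _ _ (Or.inl ⟨(f Q').2.1, h⟩)) (not_P_of_indiff f hPSP Q Q' k i hk hQ)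
  · exact h
  · exact absurd (hj _ _ (Or.inr ⟨h, (f Q').2.2⟩)) (not_P_of_indiff f hPSP Q Q' k j hk hQ)

/-- If some agents i and j have single-peaked preferences with
peaks 0 and 1 respectively, then changing the preference of any other agent k
does not change the outcome. -/
theorem stmt_8 (n : ℕ) (hn : 3 ≤ n) (f : (Fin n → S0) → A)
    (hOnto : Onto f) (hPSP : PairwiseSP f)
    (R : Fin n → S0) (i j : Fin n)
    (hi : (R i).1.IsPeak zeroA) (hj : (R j).1.IsPeak oneA)
    (k : Fin n) (hki : k ≠ i) (hkj : k ≠ j) (Rk' : S0) :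
    f (Function.update R k Rk') = f R := by
  have key : ∀ Q' : Fin n → S0, (∀ l, l ≠ k → Q' l = R l) →
      f Q' = f (Function.update R k (indiffProfile n k)) := by
    intro Q' hQ
    apply eq_of_indiff f hPSP _ _ i j k
    · rwa [Function.update_of_ne hki.symm]
    · rwa [Function.update_of_ne hkj.symm]
    · rw [Function.update_self]; rfl
    · intro l hl
      rw [Function.update_of_ne hl, hQ l hl]
  rw [key _ (fun l hl => Function.update_of_ne hl _ _), key R (fun _ _ => rfl)]
end

section
/- Let n ≥ 3 and let f : S₀ⁿ → A be onto and pairwise strategy-proof. Then for any two profiles R, R' ∈ S₀ⁿ such that every agent in each profile has a single-peaked preference, exactly one agent in each profile has peak 1, and all other agents have peak 0, it holds that f(R) = f(R'). -/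
theorem rel_zero {Q : Pref} (h : Q.IsPeak zeroA) (a b : A) : Q.rel a b ↔ a ≤ b := by
  constructor
  · intro hr
    by_contra hlt
    exact (h b a (Or.inl ⟨b.2.1, not_le.mp hlt⟩)).2 hr
  · intro hle
    rcases hle.lt_or_eq with hlt | rfl
    · exact (h a b (Or.inl ⟨a.2.1, hlt⟩)).1
    · exact (Q.total a a).elim id id

theorem rel_one {Q : Pref} (h : Q.IsPeak oneA) (a b : A) : Q.rel a b ↔ b ≤ a := by
  constructor
  · intro hr
    by_contra hlt
    exact (h b a (Or.inr ⟨not_le.mp hlt, b.2.2⟩)).2 hr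
  · intro hle
    rcases hle.lt_or_eq with hlt | rfl
    · exact (h a b (Or.inr ⟨hlt, a.2.2⟩)).1
    · exact (Q.total b b).elim id id

theorem s0_ext {Q Q' : S0} (h : ∀ a b, Q.1.rel a b ↔ Q'.1.rel a b) : Q = Q' := by
  obtain ⟨⟨r, _, _⟩, _⟩ := Q
  obtain ⟨⟨r', _, _⟩, _⟩ := Q'
  have : r = r' := by
    funext a b
    exact propext (h a b)
  subst this
  rfl

/-- The indifferent preference as an element of the domain. -/
def indiffS0 : S0 := ⟨R0, Or.inr rfl⟩

/-- An agent helped by an indifferent agent cannot gain. -/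
theorem no_help {n : ℕ} {f : (Fin n → S0) → A} (hPSP : PairwiseSP f)
    (R : Fin n → S0) {i j : Fin n} (hij : i ≠ j) (Q : S0) :
    ¬ (R i).1.P (f (Function.update R j Q))
      (f (Function.update R j indiffS0)) := by
  intro hP
  refine hPSP {i, j} ⟨i, by simp⟩ (Finset.card_le_two) ⟨Function.update R j indiffS0,
    Function.update R j Q, ?_, ?_, i, by simp, ?_⟩
  · intro k hk
    have hkj : k ≠ j := by
      rintro rfl
      simp at hk
    simp [Function.update_of_ne hkj]
  · intro k hk
    rcases Finset.mem_insert.mp hk with rfl | hk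
    · rw [Function.update_of_ne hij]
      exact hP.1
    · rw [Finset.mem_singleton.mp hk, Function.update_self]
      trivial
  · rw [Function.update_of_ne hij]
    exact hP

theorem update_indiff {n : ℕ} {f : (Fin n → S0) → A} (hPSP : PairwiseSP f)
    (R : Fin n → S0) {i j k : Fin n} (hij : i ≠ j) (hkj : k ≠ j)
    (hi : (R i).1.IsPeak oneA) (hk : (R k).1.IsPeak zeroA) (Q : S0) :
    f (Function.update R j Q) = f (Function.update R j indiffS0) := by
  rcases lt_trichotomy (f (Function.update R j Q))
    (f (Function.update R j indiffS0)) with h | h | h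
  · exact absurd (hk _ _ (Or.inl ⟨Subtype.prop (f _) |>.1, h⟩)) (no_help hPSP R hkj Q)
  · exact h
  · exact absurd (hi _ _ (Or.inr ⟨h, Subtype.prop (f _) |>.2⟩)) (no_help hPSP R hij Q)

theorem update_eq {n : ℕ} {f : (Fin n → S0) → A} (hPSP : PairwiseSP f)
    (R : Fin n → S0) {i j k : Fin n} (hij : i ≠ j) (hkj : k ≠ j)
    (hi : (R i).1.IsPeak oneA) (hk : (R k).1.IsPeak zeroA) (Q : S0) :
    f R = f (Function.update R j Q) := by
  have h := update_indiff hPSP R hij hkj hi hk (R j)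
  rw [Function.update_eq_self] at h
  rw [h, update_indiff hPSP R hij hkj hi hk Q]

/-- Any two profiles in which all agents are single-peaked,
exactly one agent has peak 1 and all others have peak 0, yield the same
outcome. -/
theorem stmt_9 (n : ℕ) (hn : 3 ≤ n) (f : (Fin n → S0) → A)
    (hOnto : Onto f) (hPSP : PairwiseSP f)
    (R R' : Fin n → S0)
    (hR : ∃ i : Fin n, (R i).1.IsPeak oneA ∧
      ∀ k : Fin n, k ≠ i → (R k).1.IsPeak zeroA)
    (hR' : ∃ i : Fin n, (R' i).1.IsPeak oneA ∧
      ∀ k : Fin n, k ≠ i → (R' k).1.IsPeak zeroA) :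
    f R = f R' := by
  obtain ⟨i, hi, hL⟩ := hR
  obtain ⟨j, hj, hL'⟩ := hR'
  have hz : ∀ m, m ≠ i → m ≠ j → R' m = R m := fun m h1 h2 =>
    s0_ext fun a b => by rw [rel_zero (hL m h1), rel_zero (hL' m h2)]
  by_cases hij : i = j
  · subst hij
    congr 1
    funext m
    by_cases hm : m = i
    · subst hm
      exact s0_ext fun a b => by rw [rel_one hi, rel_one hj]
    · exact (hz m hm hm).symm
  · obtain ⟨k, hk⟩ : ∃ k : Fin n, k ∉ ({i, j} : Finset (Fin n)) := by
      by_contra! hall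
      have h1 : (Finset.univ : Finset (Fin n)) ⊆ {i, j} := fun m _ => hall m
      have h2 := Finset.card_le_card h1
      have h3 : ({i, j} : Finset (Fin n)).card ≤ 2 := Finset.card_le_two
      rw [Finset.card_univ, Fintype.card_fin] at h2
      omega
    simp only [Finset.mem_insert, Finset.mem_singleton, not_or] at hk
    obtain ⟨hki, hkj⟩ := hk
    rw [update_eq hPSP R hij hkj hi (hL k hki) (R' j)]
    rw [update_eq hPSP (Function.update R j (R' j)) (i := j) (j := i) (k := k)
      (Ne.symm hij) hki (by rw [Function.update_self]; exact hj)
      (by rw [Function.update_of_ne hkj]; exact hL k hki) (R' i)]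
    congr 1
    funext m
    by_cases hm : m = i
    · subst hm
      rw [Function.update_self]
    · rw [Function.update_of_ne hm]
      by_cases hm' : m = j
      · subst hm'
        rw [Function.update_self]
      · rw [Function.update_of_ne hm', hz m hm hm']
end

section
/- Let n ≥ 3 and let f : S₀ⁿ → A be onto and pairwise strategy-proof. Let R̄ ∈ S₀ⁿ be a profile in which every agent has a single-peaked preference, τ(R̄_i) = 0 for all i ∈ {1,…,n−1}, and τ(R̄_n) = 1, and set x = f(R̄). Then for every profile R ∈ S₀ⁿ with R ≠ R^{0N} and τ̲(R) ≤ x ≤ τ̄(R), f(R) = x. -/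
def Ind : S0 := ⟨R0, Or.inr rfl⟩

section
variable {n : ℕ} {f : (Fin n → S0) → A}

lemma sp_single (h : PairwiseSP f) (R : Fin n → S0) (i : Fin n) (r : S0) :
    ¬ (R i).1.P (f (Function.update R i r)) (f R) := by
  intro hP
  refine h {i} (by simp) (by simp) ⟨R, Function.update R i r, ?_, ?_, ?_⟩
  · intro k hk
    simp at hk
    simp [hk]
  · intro k hk
    simp at hk
    subst hk
    exact hP.1
  · exact ⟨i, by simp, hP⟩

lemma sp_ind (h : PairwiseSP f) (R : Fin n → S0) (i j : Fin n) (r : S0)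
    (hi : (R i).1 = R0) :
    ¬ (R j).1.P (f (Function.update R i r)) (f R) := by
  intro hP
  refine h {i, j} (by simp) Finset.card_le_two ⟨R, Function.update R i r, ?_, ?_, ?_⟩
  · intro k hk
    simp at hk
    simp [hk.1]
  · intro k hk
    simp at hk
    rcases hk with rfl | rfl
    · rw [hi]; trivial
    · exact hP.1
  · exact ⟨j, by simp, hP⟩

lemma pk_le {r : Pref} {p x y : A} (hp : r.IsPeak p) (hx : p ≤ x) (h : ¬ r.P x y) : y ≤ x := by
  by_contra hc
  exact h (hp _ _ (Or.inl ⟨hx, not_le.1 hc⟩))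

lemma pk_ge {r : Pref} {p x y : A} (hp : r.IsPeak p) (hx : x ≤ p) (h : ¬ r.P x y) : x ≤ y := by
  by_contra hc
  exact h (hp _ _ (Or.inr ⟨not_le.1 hc, hx⟩))

lemma zero_leA (a : A) : zeroA ≤ a := a.2.1
lemma le_oneA (a : A) : a ≤ oneA := a.2.2

lemma step0 (h : PairwiseSP f) (R : Fin n → S0) (a b i : Fin n) (r : S0)
    (ha : (R a).1.IsPeak zeroA) (hb : (R b).1.IsPeak oneA) (hia : a ≠ i) (hib : b ≠ i) :
    f (Function.update R i r) = f R := by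
  have key : ∀ r : S0, f (Function.update R i r) = f (Function.update R i Ind) := by
    intro r
    have e1 := sp_ind h (Function.update R i Ind) i a r (by rw [Function.update_self]; rfl)
    have e2 := sp_ind h (Function.update R i Ind) i b r (by rw [Function.update_self]; rfl)
    simp only [Function.update_idem, Function.update_of_ne hia, Function.update_of_ne hib] at e1 e2
    exact le_antisymm (pk_ge hb (le_oneA _) e2) (pk_le ha (zero_leA _) e1)
  rw [key r, ← key (R i), Function.update_eq_self]

lemma stepK (h : PairwiseSP f) (R R' : Fin n → S0) (a b : Fin n)
    (ha : (R a).1.IsPeak zeroA) (hb : (R b).1.IsPeak oneA) (hae : R' a = R a) (hbe : R' b = R b) :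
    f R' = f R := by
  have key : ∀ s : Finset (Fin n), f (s.piecewise R' R) = f R := by
    intro s
    have hpa : ∀ s : Finset (Fin n), s.piecewise R' R a = R a := by
      intro s
      by_cases hs : a ∈ s <;> simp [hs, hae]
    have hpb : ∀ s : Finset (Fin n), s.piecewise R' R b = R b := by
      intro s
      by_cases hs : b ∈ s <;> simp [hs, hbe]
    induction s using Finset.induction_on with
    | empty => simp
    | insert i s hi ih =>
      rw [Finset.piecewise_insert]
      by_cases hia : a = i
      · subst hia
        rw [hae, ← hpa s, Function.update_eq_self, ih]
      by_cases hib : b = i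
      · subst hib
        rw [hbe, ← hpb s, Function.update_eq_self, ih]
      rw [step0 h _ a b i _ (by rw [hpa]; exact ha) (by rw [hpb]; exact hb) hia hib, ih]
  have := key Finset.univ
  simpa using this

lemma exists_third (hn : 3 ≤ n) (a b : Fin n) : ∃ e : Fin n, e ≠ a ∧ e ≠ b := by
  have : ({a, b} : Finset (Fin n)).card < (Finset.univ : Finset (Fin n)).card := by
    have := Finset.card_le_two (a := a) (b := b)
    simp only [Finset.card_univ, Fintype.card_fin]
    omega
  obtain ⟨e, -, he⟩ := Finset.exists_mem_notMem_of_card_lt_card this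
  simp at he
  exact ⟨e, he⟩

lemma samePair (hn : 3 ≤ n) (h : PairwiseSP f) (R R' : Fin n → S0) (a b : Fin n) (hab : a ≠ b)
    (ha : (R a).1.IsPeak zeroA) (hb : (R b).1.IsPeak oneA)
    (ha' : (R' a).1.IsPeak zeroA) (hb' : (R' b).1.IsPeak oneA) : f R = f R' := by
  obtain ⟨e, hea, heb⟩ := exists_third hn a b
  have key : ∀ Q : Fin n → S0, (Q a).1.IsPeak zeroA → (Q b).1.IsPeak oneA →
      f (Function.update (Function.update Q e (R a)) a (R b)) = f Q := by
    intro Q h1 h2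
    have e1 : f (Function.update Q e (R a)) = f Q := step0 h Q a b e _ h1 h2 hea.symm heb.symm
    rw [← e1]
    refine step0 h _ e b a _ ?_ ?_ hea hab.symm
    · simpa using ha
    · simpa [heb.symm] using h2
  rw [← key R ha hb, ← key R' ha' hb']
  refine stepK h _ _ e a ?_ ?_ ?_ ?_
  · simpa [hea] using ha
  · simpa using hb
  · simp [hea]
  · simp

lemma ne_of_peaks {r : Pref} (h0 : r.IsPeak zeroA) (h1 : r.IsPeak oneA) : False := by
  have hl : zeroA < oneA := by
    show (0:ℝ) < 1
    norm_num
  have e1 := h0 zeroA oneA (Or.inl ⟨le_rfl, hl⟩)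
  have e2 := h1 oneA zeroA (Or.inr ⟨hl, le_rfl⟩)
  exact e1.2 e2.1

lemma allPair (hn : 3 ≤ n) (h : PairwiseSP f) (R R' : Fin n → S0) (a b c d : Fin n)
    (ha : (R a).1.IsPeak zeroA) (hb : (R b).1.IsPeak oneA)
    (hc : (R' c).1.IsPeak zeroA) (hd : (R' d).1.IsPeak oneA) : f R = f R' := by
  obtain ⟨e, heb, hed⟩ := exists_third hn b d
  have hab : a ≠ b := by
    rintro rfl
    exact ne_of_peaks ha hb
  have hcd : c ≠ d := by
    rintro rfl
    exact ne_of_peaks hc hd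
  have e1 : f R = f (Function.update (fun _ => R a) b (R b)) :=
    samePair hn h _ _ a b hab ha hb (by simpa [hab] using ha) (by simpa using hb)
  have e2 : f (Function.update (fun _ => R a) b (R b)) = f (Function.update (fun _ => R b) e (R a)) :=
    samePair hn h _ _ e b heb (by simpa [heb] using ha) (by simpa using hb)
      (by simpa using ha) (by simpa [heb.symm] using hb)
  have e3 : f (Function.update (fun _ => R b) e (R a)) = f (Function.update (fun _ => R a) d (R b)) :=
    samePair hn h _ _ e d hed (by simpa using ha) (by simpa [hed.symm] using hb)
      (by simpa [hed] using ha) (by simpa using hb)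
  have e4 : f (Function.update (fun _ => R a) d (R b)) = f R' :=
    samePair hn h _ _ c d hcd (by simpa [hcd] using ha) (by simpa using hb) hc hd
  rw [e1, e2, e3, e4]

/-- Moving a 0-peaked agent to a peak below the outcome keeps the outcome. -/
lemma moveLow (h : PairwiseSP f) (R : Fin n → S0) (a : Fin n) (z : S0) (hz : z.1.IsPeak zeroA)
    (p : A) (hp : (R a).1.IsPeak p) (hpx : p ≤ f (Function.update R a z)) :
    f R = f (Function.update R a z) := by
  have e1 := sp_single h R a z
  have e2 := sp_single h (Function.update R a z) a (R a)
  simp only [Function.update_idem, Function.update_self, Function.update_eq_self] at e2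
  exact le_antisymm (pk_le hp hpx e1) (pk_le hz (zero_leA _) e2)

lemma moveHigh (h : PairwiseSP f) (R : Fin n → S0) (a : Fin n) (z : S0) (hz : z.1.IsPeak oneA)
    (p : A) (hp : (R a).1.IsPeak p) (hpx : f (Function.update R a z) ≤ p) :
    f R = f (Function.update R a z) := by
  have e1 := sp_single h R a z
  have e2 := sp_single h (Function.update R a z) a (R a)
  simp only [Function.update_idem, Function.update_self, Function.update_eq_self] at e2
  exact le_antisymm (pk_ge hz (le_oneA _) e2) (pk_ge hp hpx e1)

/-- Outcome when agent `a` has a low peak and agent `b` is moved to peak one. -/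
lemma half (h : PairwiseSP f) (x : A)
    (hall : ∀ R : Fin n → S0, ∀ a b, (R a).1.IsPeak zeroA → (R b).1.IsPeak oneA → f R = x)
    (R : Fin n → S0) (a b : Fin n) (hab : a ≠ b) (z o : S0)
    (hz : z.1.IsPeak zeroA) (ho : o.1.IsPeak oneA)
    (p : A) (hp : (R a).1.IsPeak p) (hpx : p ≤ x) : f (Function.update R b o) = x := by
  have e : f (Function.update (Function.update R b o) a z) = x :=
    hall _ a b (by simpa using hz) (by simpa [hab.symm] using ho)
  rw [moveLow h (Function.update R b o) a z hz p (by simpa [hab] using hp) (by rw [e]; exact hpx), e]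

lemma two (h : PairwiseSP f) (x : A)
    (hall : ∀ R : Fin n → S0, ∀ a b, (R a).1.IsPeak zeroA → (R b).1.IsPeak oneA → f R = x)
    (R : Fin n → S0) (a b : Fin n) (hab : a ≠ b) (z o : S0)
    (hz : z.1.IsPeak zeroA) (ho : o.1.IsPeak oneA)
    (p q : A) (hp : (R a).1.IsPeak p) (hpx : p ≤ x) (hq : (R b).1.IsPeak q) (hqx : x ≤ q) :
    f R = x := by
  have e := half h x hall R a b hab z o hz ho p hp hpx
  rw [moveHigh h R b o ho q hq (by rw [e]; exact hqx), e]

lemma peak_isPeak_s10 (r : S0) (hr : r.1 ≠ R0) : r.1.IsPeak (peak r.1) := by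
  have hs : SinglePeaked r.1 := r.2.resolve_right hr
  unfold peak
  rw [dif_pos hs]
  exact hs.choose_spec

lemma peaks_finite (R : Fin n → S0) :
    {x : ℝ | ∃ i : Fin n, (R i).1 ≠ R0 ∧ ((peak (R i).1 : ℝ) = x)}.Finite := by
  refine (Set.finite_range (fun i : Fin n => (peak (R i).1 : ℝ))).subset ?_
  rintro x ⟨i, -, hi⟩
  exact ⟨i, hi⟩

lemma peaks_nonempty (R : Fin n → S0) (hR : R ≠ indiffProfile n) :
    {x : ℝ | ∃ i : Fin n, (R i).1 ≠ R0 ∧ ((peak (R i).1 : ℝ) = x)}.Nonempty := by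
  by_contra hne
  apply hR
  funext i
  apply Subtype.ext
  by_contra hi
  exact hne ⟨_, i, hi, rfl⟩

end

/-- With x the value selected at a profile where agents
1,…,n−1 have peak 0 and agent n has peak 1, every profile R ≠ R^{0N} with
τ̲(R) ≤ x ≤ τ̄(R) gets outcome x. -/
theorem stmt_10 (n : ℕ) (hn : 3 ≤ n) (f : (Fin n → S0) → A)
    (hOnto : Onto f) (hPSP : PairwiseSP f)
    (Rbar : Fin n → S0)
    (h0 : ∀ i : Fin n, (i : ℕ) < n - 1 → (Rbar i).1.IsPeak zeroA)
    (h1 : (Rbar ⟨n - 1, by omega⟩).1.IsPeak oneA)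
    (R : Fin n → S0) (hR : R ≠ indiffProfile n)
    (hx : tmin R ≤ (f Rbar : ℝ) ∧ (f Rbar : ℝ) ≤ tmax R) :
    f R = f Rbar := by
  have hlast : 0 < n - 1 := by omega
  have hz := h0 ⟨0, by omega⟩ hlast
  have hall : ∀ R : Fin n → S0, ∀ a b, (R a).1.IsPeak zeroA → (R b).1.IsPeak oneA →
      f R = f Rbar := fun R a b ha hb => allPair hn hPSP R Rbar a b _ _ ha hb hz h1
  obtain ⟨a, ha, hamin⟩ := (peaks_nonempty R hR).csInf_mem (peaks_finite R)
  obtain ⟨b, hb, hbmax⟩ := (peaks_nonempty R hR).csSup_mem (peaks_finite R)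
  have hpa := peak_isPeak_s10 _ ha
  have hpb := peak_isPeak_s10 _ hb
  have hax : peak (R a).1 ≤ f Rbar := by
    show (peak (R a).1 : ℝ) ≤ _
    rw [hamin]; exact hx.1
  have hbx : f Rbar ≤ peak (R b).1 := by
    show _ ≤ (peak (R b).1 : ℝ)
    rw [hbmax]; exact hx.2
  by_cases hab : a = b
  · subst hab
    obtain ⟨e, hea, -⟩ := exists_third hn a a
    by_cases he : (R e).1 = R0
    · have e1 := half hPSP _ hall R a e hea.symm _ _ hz h1 _ hpa hax
      have e2 := sp_ind hPSP R e a (Rbar ⟨n - 1, by omega⟩) he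
      rw [e1] at e2
      exact le_antisymm (pk_le hpa hax e2) (pk_ge hpa hbx e2)
    · have hpe := peak_isPeak_s10 _ he
      rcases le_total (peak (R e).1) (f Rbar) with hle | hle
      · exact two hPSP _ hall R e a hea _ _ hz h1 _ _ hpe hle hpa hbx
      · exact two hPSP _ hall R a e hea.symm _ _ hz h1 _ _ hpa hax hpe hle
  · exact two hPSP _ hall R a b hab _ _ hz h1 _ _ hpa hax hpb hbx
end
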